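/- Let n ≥ 2 and suppose G ⊂ ℝⁿ is a bounded domain satisfying a β-quasihyperbolic boundary condition with 1 - 2/n ≤ β ≤ 1, and let 1 ≤ q < 2. If the characterization holds that the Neumann problem L_A u = f on G is q-solvable if and only if G supports a (q,2)-Poincaré inequality, then the Neumann problem on G is q-solvable. -/

import Mathlib

open MeasureTheory ENNReal

/-- The quasihyperbolic distance `k_G(x, y) = inf_γ ∫_γ ds / dist(z, ∂G)`, the infimum
being over rectifiable curves in `G` from `x` to `y`, parametrized by arc length
(encoded as `1`-Lipschitz parametrizations). -/
noncomputable def qhDist {n : ℕ} (G : Set (EuclideanSpace ℝ (Fin n)))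
    (x y : EuclideanSpace ℝ (Fin n)) : ℝ :=
  sInf {v : ℝ | ∃ (L : ℝ) (γ : ℝ → EuclideanSpace ℝ (Fin n)), 0 ≤ L ∧
    LipschitzWith 1 γ ∧ γ 0 = x ∧ γ L = y ∧ (∀ t ∈ Set.Icc (0:ℝ) L, γ t ∈ G) ∧
    v = ∫ t in (0:ℝ)..L, 1 / Metric.infDist (γ t) (frontier G)}

/-- `G` satisfies a `β`-quasihyperbolic boundary condition with base point `x₀` and
constant `c`: `k_G(x, x₀) ≤ (1/β) log(1/dist(x, ∂G)) + c` for all `x ∈ G`. -/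
def QHBCWith {n : ℕ} (G : Set (EuclideanSpace ℝ (Fin n))) (β : ℝ)
    (x₀ : EuclideanSpace ℝ (Fin n)) (c : ℝ) : Prop :=
  ∀ x ∈ G, qhDist G x x₀ ≤ (1 / β) * Real.log (1 / Metric.infDist x (frontier G)) + c

/-- `G` satisfies a `β`-quasihyperbolic boundary condition. -/
def QHBC {n : ℕ} (G : Set (EuclideanSpace ℝ (Fin n))) (β : ℝ) : Prop :=
  ∃ x₀ ∈ G, ∃ c : ℝ, QHBCWith G β x₀ c

/-- `G` supports the `(q,p)`-Poincaré inequality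
`(∫_G |u - u_G|^q)^{1/q} ≤ c (∫_G |∇u|^p)^{1/p}` for Sobolev functions on `G`. -/
def SupportsPoincare {n : ℕ} (G : Set (EuclideanSpace ℝ (Fin n))) (q p : ℝ) : Prop :=
  ∃ c : ℝ, ∀ u : EuclideanSpace ℝ (Fin n) → ℝ,
    DifferentiableOn ℝ u G → IntegrableOn u G volume →
    IntegrableOn (fun x => ‖fderivWithin ℝ u G x‖ ^ p) G volume →
    (∫ x in G, |u x - (∫ y in G, u y) / (volume G).toReal| ^ q) ^ (1 / q)
      ≤ c * (∫ x in G, ‖fderivWithin ℝ u G x‖ ^ p) ^ (1 / p)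

/-!
Write `δ x` for the distance from `x` to the boundary. Under a `β`-quasihyperbolic boundary
condition every `x ∈ G` is joined to `x₀` by a curve of quasihyperbolic length
`≲ 1 + log⁺ (1 / δ x)` on which `dist x z ≲ δ z ^ β`. Chaining averages of `u` over Whitney balls
along this curve bounds `|u x - u_{B(x₀)}|` by `1 + log⁺ (1 / δ x)` times `Φ x ^ (1 / p)`, where
`Φ x` is a local oscillation of `u` plus a potential that collects `|∇u| ^ p` over the points `y`
with `dist x y ≲ δ y ^ β`. By Tonelli `∫ Φ ≲ ∫ |∇u| ^ p`: the points `x` that see a given `y` fill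
a ball of radius `≲ δ y ^ β`, and `(1 - β) n ≤ p` is exactly what makes the weights bounded. The
logarithm is dominated by the quasihyperbolic volume of a nontangential approach region at `x`, all
of whose powers are integrable over the bounded set `G`. As `q < p`, Hölder's inequality concludes.
-/

section Gauge

variable {X : Type*} [PseudoMetricSpace X]

/-- A substitute `δ` for the distance to the boundary of an open set `G`: a positive `1`-Lipschitz
function for which the ball of radius `δ x` around any `x ∈ G` stays in `G`. -/
structure IsBoundaryGauge (G : Set X) (δ : X → ℝ) : Prop where
  lipschitzWith : LipschitzWith 1 δ
  pos : ∀ x ∈ G, 0 < δ x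
  ball_subset : ∀ x ∈ G, Metric.ball x (δ x) ⊆ G

namespace IsBoundaryGauge

variable {G : Set X} {δ : X → ℝ}

theorem isOpen (hδ : IsBoundaryGauge G δ) : IsOpen G :=
  Metric.isOpen_iff.2 fun x hx => ⟨δ x, hδ.pos x hx, hδ.ball_subset x hx⟩

theorem le_add_dist (hδ : IsBoundaryGauge G δ) (x y : X) : δ x ≤ δ y + dist x y := by
  simpa using hδ.lipschitzWith.le_add_mul x y

theorem continuous (hδ : IsBoundaryGauge G δ) : Continuous δ := hδ.lipschitzWith.continuous

end IsBoundaryGauge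

end Gauge

theorem isBoundaryGauge_infDist_frontier {E : Type*} [NormedAddCommGroup E] [NormedSpace ℝ E]
    [Nontrivial E] [FiniteDimensional ℝ E] {G : Set E} (hGo : IsOpen G)
    (hGb : Bornology.IsBounded G) : IsBoundaryGauge G fun x => Metric.infDist x (frontier G) where
  lipschitzWith := Metric.lipschitz_infDist_pt _
  pos x hx := by
    have hne : (frontier G).Nonempty := nonempty_frontier_iff.2
      ⟨⟨x, hx⟩, fun h => NormedSpace.unbounded_univ ℝ E (h ▸ hGb)⟩
    exact (isClosed_frontier.notMem_iff_infDist_pos hne).1 fun hx' =>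
      Set.disjoint_left.1 (disjoint_frontier_iff_isOpen.2 hGo) hx' hx
  ball_subset x hx := by
    have hne : G ≠ Set.univ := fun h => NormedSpace.unbounded_univ ℝ E (h ▸ hGb)
    obtain ⟨y, hy, hxy⟩ := exists_mem_frontier_infDist_compl_eq_dist hx hne
    refine (Metric.ball_subset_ball ?_).trans Metric.ball_infDist_compl_subset
    exact hxy ▸ Metric.infDist_le_dist_of_mem hy

section Curves

variable {X : Type*} [PseudoMetricSpace X]

/-- `γ` is a curve in `G` of length at most `L` from `x` to `y`, parametrized on `[0, L]` with speed
at most one. For convenience `γ` is defined on all of `ℝ` and never leaves `G`. -/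
structure IsLipCurve (G : Set X) (γ : ℝ → X) (L : ℝ) (x y : X) : Prop where
  length_nonneg : 0 ≤ L
  lipschitzWith : LipschitzWith 1 γ
  source : γ 0 = x
  target : γ L = y
  mem : ∀ t, γ t ∈ G

/-- The length of `γ` on `[s, t]` with respect to the density `1 / δ`; for `δ` the distance to the
boundary this is the quasihyperbolic length. -/
noncomputable def qhLength (δ : X → ℝ) (γ : ℝ → X) (s t : ℝ) : ℝ := ∫ r in s..t, 1 / δ (γ r)

/-- The infimum of the `qhLength`s of the curves in `G` from `x` to `y`. -/
noncomputable def gaugeDist (G : Set X) (δ : X → ℝ) (x y : X) : ℝ :=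
  sInf {v | ∃ L γ, IsLipCurve G γ L x y ∧ v = qhLength δ γ 0 L}

theorem dist_le_sub_of_lipschitzWith_one {γ : ℝ → X} (hγ : LipschitzWith 1 γ) {s t : ℝ}
    (hst : s ≤ t) : dist (γ s) (γ t) ≤ t - s := by
  have h := hγ.dist_le_mul s t
  rwa [NNReal.coe_one, one_mul, dist_comm s, Real.dist_eq, abs_of_nonneg (sub_nonneg.2 hst)] at h

theorem lipschitzWith_one_of_dist_le_sub {γ : ℝ → X}
    (hγ : ∀ s t, s ≤ t → dist (γ s) (γ t) ≤ t - s) : LipschitzWith 1 γ := by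
  refine LipschitzWith.mk_one fun s t => ?_
  rcases le_total s t with hst | hst
  · rw [dist_comm s, Real.dist_eq]
    exact (hγ s t hst).trans (le_abs_self _)
  · rw [dist_comm, Real.dist_eq]
    exact (hγ t s hst).trans (le_abs_self _)

theorem lipschitzWith_one_ite_le {γ η : ℝ → X} (hγ : LipschitzWith 1 γ) (hη : LipschitzWith 1 η)
    {a : ℝ} (ha : γ a = η a) : LipschitzWith 1 fun t => if t ≤ a then γ t else η t := by
  refine lipschitzWith_one_of_dist_le_sub fun s t hst => ?_
  by_cases hs : s ≤ a <;> by_cases ht : t ≤ a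
  · simpa only [hs, ht, if_true] using dist_le_sub_of_lipschitzWith_one hγ hst
  · simp only [hs, ht, if_true, if_false]
    have h₁ := dist_le_sub_of_lipschitzWith_one hγ hs
    have h₂ := dist_le_sub_of_lipschitzWith_one hη (not_le.1 ht).le
    rw [ha] at h₁
    linarith [dist_triangle (γ s) (η a) (η t)]
  · exact absurd (hst.trans ht) hs
  · simpa only [hs, ht, if_false] using dist_le_sub_of_lipschitzWith_one hη hst

theorem exists_isLipCurve_of_mapsTo_Icc {G : Set X} {γ : ℝ → X} {L : ℝ} (hL : 0 ≤ L)
    (hγ : LipschitzWith 1 γ) (hG : ∀ t ∈ Set.Icc 0 L, γ t ∈ G) :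
    ∃ η, IsLipCurve G η L (γ 0) (γ L) ∧ Set.EqOn η γ (Set.Icc 0 L) := by
  refine ⟨fun t => γ (max 0 (min t L)), ⟨hL, ?_, by simp [hL], by simp [hL], fun t => hG _
    ⟨le_max_left _ _, max_le hL (min_le_right _ _)⟩⟩, fun t ht => by simp [ht.1, ht.2]⟩
  have hclamp := hγ.comp ((LipschitzWith.id.min_const L).const_max 0)
  rwa [one_mul] at hclamp

namespace IsLipCurve

variable {G : Set X} {δ : X → ℝ} {γ η : ℝ → X} {L L' : ℝ} {x y z : X}

theorem take (hγ : IsLipCurve G γ L x y) {s : ℝ} (hs : 0 ≤ s) : IsLipCurve G γ s x (γ s) :=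
  ⟨hs, hγ.lipschitzWith, hγ.source, rfl, hγ.mem⟩

theorem concat (hγ : IsLipCurve G γ L x y) (hη : IsLipCurve G η L' y z) :
    IsLipCurve G (fun t => if t ≤ L then γ t else η (t - L)) (L + L') x z where
  length_nonneg := add_nonneg hγ.length_nonneg hη.length_nonneg
  lipschitzWith := lipschitzWith_one_ite_le (η := fun t => η (t - L)) hγ.lipschitzWith
    (lipschitzWith_one_of_dist_le_sub fun s t hst =>
      (dist_le_sub_of_lipschitzWith_one hη.lipschitzWith (sub_le_sub_right hst L)).trans
        (sub_sub_sub_cancel_right t s L).le) (by rw [sub_self, hγ.target, hη.source])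
  source := by rw [if_pos hγ.length_nonneg, hγ.source]
  target := by
    rcases hη.length_nonneg.eq_or_lt with h | h
    · rw [← h, add_zero, if_pos le_rfl, hγ.target, ← hη.source, h, hη.target]
    · rw [if_neg (by linarith), add_sub_cancel_left, hη.target]
  mem t := by
    split_ifs
    exacts [hγ.mem _, hη.mem _]

theorem continuous_one_div (hδ : IsBoundaryGauge G δ) (hγ : IsLipCurve G γ L x y) :
    Continuous fun t => 1 / δ (γ t) :=
  continuous_const.div (hδ.continuous.comp hγ.lipschitzWith.continuous) fun t =>
    (hδ.pos _ (hγ.mem t)).ne'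

theorem qhLength_add_qhLength (hδ : IsBoundaryGauge G δ) (hγ : IsLipCurve G γ L x y) (r s t : ℝ) :
    qhLength δ γ r s + qhLength δ γ s t = qhLength δ γ r t :=
  intervalIntegral.integral_add_adjacent_intervals
    ((hγ.continuous_one_div hδ).intervalIntegrable _ _)
    ((hγ.continuous_one_div hδ).intervalIntegrable _ _)

theorem qhLength_nonneg (hδ : IsBoundaryGauge G δ) (hγ : IsLipCurve G γ L x y) {s t : ℝ}
    (hst : s ≤ t) : 0 ≤ qhLength δ γ s t :=
  intervalIntegral.integral_nonneg hst fun r _ => one_div_nonneg.2 (hδ.pos _ (hγ.mem r)).le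

theorem qhLength_concat (hδ : IsBoundaryGauge G δ) (hγ : IsLipCurve G γ L x y)
    (hη : IsLipCurve G η L' y z) :
    qhLength δ (fun t => if t ≤ L then γ t else η (t - L)) 0 (L + L') =
      qhLength δ γ 0 L + qhLength δ η 0 L' := by
  rw [← (hγ.concat hη).qhLength_add_qhLength hδ 0 L (L + L')]
  congr 1
  · refine intervalIntegral.integral_congr fun t ht => ?_
    rw [Set.uIcc_of_le hγ.length_nonneg] at ht
    simp only [ht.2, if_true]
  · have hshift := intervalIntegral.integral_comp_sub_right (fun t => 1 / δ (η t)) L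
      (a := L) (b := L + L')
    rw [sub_self, add_sub_cancel_left] at hshift
    rw [qhLength, qhLength, ← hshift]
    refine intervalIntegral.integral_congr fun t ht => ?_
    rw [Set.uIcc_of_le (by linarith [hη.length_nonneg])] at ht
    rcases ht.1.eq_or_lt with rfl | h
    · simp only [le_rfl, if_true, sub_self, hγ.target, hη.source]
    · simp only [not_le.2 h, if_false]

theorem log_le_qhLength (hδ : IsBoundaryGauge G δ) (hγ : IsLipCurve G γ L x y) {s t : ℝ}
    (hst : s ≤ t) : Real.log ((δ (γ s) + (t - s)) / δ (γ s)) ≤ qhLength δ γ s t := by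
  have hpos := hδ.pos _ (hγ.mem s)
  have hlog : Real.log ((δ (γ s) + (t - s)) / δ (γ s)) =
      ∫ r in s..t, 1 / (r + (δ (γ s) - s)) := by
    rw [intervalIntegral.integral_comp_add_right (fun r : ℝ => 1 / r) (δ (γ s) - s),
      integral_one_div_of_pos (by linarith) (by linarith)]
    congr 2 <;> ring
  rw [hlog]
  refine intervalIntegral.integral_mono_on hst (ContinuousOn.intervalIntegrable ?_)
    ((hγ.continuous_one_div hδ).intervalIntegrable _ _) fun r hr => ?_
  · rw [Set.uIcc_of_le hst]
    exact continuousOn_const.div (by fun_prop) fun r hr => by linarith [hr.1]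
  · refine one_div_le_one_div_of_le (hδ.pos _ (hγ.mem r)) ?_
    have hdist := dist_le_sub_of_lipschitzWith_one hγ.lipschitzWith hr.1
    have hle := hδ.le_add_dist (γ r) (γ s)
    rw [dist_comm] at hle
    linarith

theorem sub_div_le_qhLength (hδ : IsBoundaryGauge G δ) (hγ : IsLipCurve G γ L x y) {s t b : ℝ}
    (hst : s ≤ t) (hb : ∀ r ∈ Set.Icc s t, δ (γ r) ≤ b) : (t - s) / b ≤ qhLength δ γ s t := by
  calc (t - s) / b = ∫ _ in s..t, 1 / b := by
        rw [intervalIntegral.integral_const, smul_eq_mul, mul_one_div]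
    _ ≤ qhLength δ γ s t := intervalIntegral.integral_mono_on hst intervalIntegrable_const
        ((hγ.continuous_one_div hδ).intervalIntegrable _ _) fun r hr =>
          one_div_le_one_div_of_le (hδ.pos _ (hγ.mem r)) (hb r hr)

theorem exists_le_dist_and_qhLength_le_or_le (hδ : IsBoundaryGauge G δ)
    (hγ : IsLipCurve G γ L x y) {Λ : ℝ} (hΛ : 0 < Λ) {r t : ℝ} (ht : 0 < t) (hr : 0 ≤ r)
    (htr : 8 * t ≤ dist x (γ r)) : ∃ s, 0 ≤ s ∧ t ≤ dist x (γ s) ∧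
      (qhLength δ γ 0 s + Λ ≤ qhLength δ γ 0 r ∨ qhLength δ γ 0 s ≤ qhLength δ γ 0 r ∧
        ∃ p ∈ G, 3 * t / 4 ≤ dist x p ∧ dist x p ≤ 5 * t / 4 ∧ t / (4 * Λ) ≤ δ p) := by
  obtain ⟨s, ⟨hs₀, hsr⟩, hst : dist x (γ s) = t⟩ := intermediate_value_Icc hr
    (continuous_const.dist hγ.lipschitzWith.continuous).continuousOn
    (show t ∈ Set.Icc (dist x (γ 0)) (dist x (γ r)) from
      ⟨by rw [hγ.source, dist_self]; exact ht.le, by linarith⟩)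
  have hsub : ∀ s' ∈ Set.Icc s (s + t / 4),
      3 * t / 4 ≤ dist x (γ s') ∧ dist x (γ s') ≤ 5 * t / 4 := by
    intro s' hs'
    have hdist := dist_le_sub_of_lipschitzWith_one hγ.lipschitzWith hs'.1
    have htriangle := dist_triangle x (γ s) (γ s')
    have htriangle' := dist_triangle_right x (γ s) (γ s')
    constructor <;> linarith [hs'.2]
  have hsr' : s + t / 4 ≤ r := by
    linarith [dist_le_sub_of_lipschitzWith_one hγ.lipschitzWith hsr, dist_triangle x (γ s) (γ r)]
  have hadd := hγ.qhLength_add_qhLength hδ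
  have hrest := hγ.qhLength_nonneg hδ hsr'
  refine ⟨s, hs₀, hst.ge, ?_⟩
  by_cases hp : ∃ s' ∈ Set.Icc s (s + t / 4), t / (4 * Λ) ≤ δ (γ s')
  · obtain ⟨s', hs', hδs'⟩ := hp
    exact Or.inr ⟨by linarith [hadd 0 s r, hγ.qhLength_nonneg hδ hsr],
      γ s', hγ.mem s', (hsub s' hs').1, (hsub s' hs').2, hδs'⟩
  · push Not at hp
    have hΛs := hγ.sub_div_le_qhLength hδ (by linarith) fun s' hs' => (hp s' hs').le
    have hΛt : (s + t / 4 - s) / (t / (4 * Λ)) = Λ := by field_simp; ring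
    exact Or.inl (by linarith [hadd 0 s r, hadd s (s + t / 4) r])

theorem hasDerivAt_qhLength_left (hδ : IsBoundaryGauge G δ) (hγ : IsLipCurve G γ L x y) (s t : ℝ) :
    HasDerivAt (fun s => qhLength δ γ s t) (-(1 / δ (γ s))) s :=
  have hc := hγ.continuous_one_div hδ
  intervalIntegral.integral_hasDerivAt_left (hc.intervalIntegrable _ _)
    (hc.stronglyMeasurableAtFilter _ _) hc.continuousAt

theorem sub_le_mul_exp_qhLength (hδ : IsBoundaryGauge G δ) (hγ : IsLipCurve G γ L x y) {β K : ℝ}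
    (hβ : 0 < β) (hK : 0 ≤ K)
    (hdecay : ∀ s ∈ Set.Icc 0 L, δ (γ s) ≤ K * Real.exp (-β * qhLength δ γ s L)) {s : ℝ}
    (hs : s ∈ Set.Icc 0 L) : s ≤ K / β * Real.exp (-β * qhLength δ γ s L) := by
  have hderiv : ∀ r, HasDerivAt (fun r => K / β * Real.exp (-β * qhLength δ γ r L) - r)
      (K * Real.exp (-β * qhLength δ γ r L) / δ (γ r) - 1) r := by
    intro r
    refine ((((hγ.hasDerivAt_qhLength_left hδ r L).const_mul (-β)).exp.const_mul (K / β)).sub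
      (hasDerivAt_id r)).congr_deriv ?_
    have := (hδ.pos _ (hγ.mem r)).ne'
    field_simp
  have hmono : MonotoneOn (fun r => K / β * Real.exp (-β * qhLength δ γ r L) - r)
      (Set.Icc 0 L) := by
    refine monotoneOn_of_deriv_nonneg (convex_Icc 0 L)
      (fun r _ => (hderiv r).continuousAt.continuousWithinAt)
      (fun r _ => (hderiv r).differentiableAt.differentiableWithinAt) fun r hr => ?_
    rw [(hderiv r).deriv, sub_nonneg, le_div_iff₀ (hδ.pos _ (hγ.mem r)), one_mul]
    exact hdecay r (interior_subset hr)
  have hle := hmono (Set.left_mem_Icc.2 (hs.1.trans hs.2)) hs hs.1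
  have hnonneg : 0 ≤ K / β * Real.exp (-β * qhLength δ γ 0 L) := by positivity
  simp only [sub_zero] at hle
  linarith

theorem exp_qhLength_le (hδ : IsBoundaryGauge G δ) (hγ : IsLipCurve G γ L x y) {β : ℝ}
    (hβ : 0 < β) {s t : ℝ} (hst : s ≤ t) :
    Real.exp (-β * qhLength δ γ s t) ≤ δ (γ s) ^ β / δ (γ t) ^ β := by
  have hs := hδ.pos _ (hγ.mem s)
  have ht := hδ.pos _ (hγ.mem t)
  have hle : δ (γ t) ≤ δ (γ s) + (t - s) := by
    have h := hδ.le_add_dist (γ t) (γ s)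
    rw [dist_comm] at h
    linarith [dist_le_sub_of_lipschitzWith_one hγ.lipschitzWith hst]
  have hlog : Real.log (δ (γ t) / δ (γ s)) ≤ qhLength δ γ s t :=
    (Real.log_le_log (by positivity) (by gcongr)).trans (hγ.log_le_qhLength hδ hst)
  rw [← Real.div_rpow hs.le ht.le, Real.rpow_def_of_pos (by positivity), Real.exp_le_exp,
    ← inv_div, Real.log_inv]
  nlinarith

end IsLipCurve

variable {G : Set X} {δ : X → ℝ} {x y : X}

theorem gaugeDist_le_qhLength (hδ : IsBoundaryGauge G δ) {γ : ℝ → X} {L : ℝ}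
    (hγ : IsLipCurve G γ L x y) : gaugeDist G δ x y ≤ qhLength δ γ 0 L :=
  csInf_le ⟨0, by rintro _ ⟨L, γ, hγ, rfl⟩; exact hγ.qhLength_nonneg hδ hγ.length_nonneg⟩
    ⟨L, γ, hγ, rfl⟩

theorem exists_isLipCurve_qhLength_lt (hxy : ∃ L γ, IsLipCurve G γ L x y) {a : ℝ}
    (ha : gaugeDist G δ x y < a) : ∃ L γ, IsLipCurve G γ L x y ∧ qhLength δ γ 0 L < a := by
  obtain ⟨L, γ, hγ⟩ := hxy
  rw [gaugeDist] at ha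
  obtain ⟨_, ⟨L', η, hη, rfl⟩, hlt⟩ := exists_lt_of_csInf_lt (by exact ⟨_, L, γ, hγ, rfl⟩) ha
  exact ⟨L', η, hη, hlt⟩

theorem exists_nearGeodesic (hδ : IsBoundaryGauge G δ)
    (hG : ∀ x ∈ G, ∃ L γ, IsLipCurve G γ L x y) (hx : x ∈ G) :
    ∃ L γ, IsLipCurve G γ L x y ∧
      ∀ s ∈ Set.Icc 0 L, qhLength δ γ s L ≤ gaugeDist G δ (γ s) y + 1 := by
  obtain ⟨L, γ, hγ, hlt⟩ := exists_isLipCurve_qhLength_lt (hG x hx) (lt_add_one (gaugeDist G δ x y))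
  refine ⟨L, γ, hγ, fun s hs => ?_⟩
  by_contra! hcon
  obtain ⟨L', η, hη, hshort⟩ := exists_isLipCurve_qhLength_lt (hG _ (hγ.mem s))
    (lt_sub_iff_add_lt.2 hcon)
  have hle := gaugeDist_le_qhLength hδ ((hγ.take hs.1).concat hη)
  rw [(hγ.take hs.1).qhLength_concat hδ hη] at hle
  linarith [hγ.qhLength_add_qhLength hδ 0 s L]

/-- `γ` runs from `x` to `x₀` like the axis of a cusp of order `1 / β` with apex `x`: after length
`s` its distance to the boundary, as measured by the gauge `δ`, is at least of order `s ^ (1 / β)`,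
and its `qhLength` is logarithmic in `δ x`. -/
structure IsCuspCurve (G : Set X) (δ : X → ℝ) (β C : ℝ) (γ : ℝ → X) (L : ℝ) (x x₀ : X) : Prop
    extends IsLipCurve G γ L x x₀ where
  qhLength_le : qhLength δ γ 0 L ≤ 1 / β * Real.log (1 / δ x) + C
  le_rpow : ∀ s ∈ Set.Icc 0 L, s ≤ C * δ (γ s) ^ β

theorem exists_isCuspCurve (hδ : IsBoundaryGauge G δ) {x₀ : X}
    (hG : ∀ x ∈ G, ∃ L γ, IsLipCurve G γ L x x₀) (hx₀ : x₀ ∈ G) {β c : ℝ} (hβ : 0 < β)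
    (hqh : ∀ x ∈ G, gaugeDist G δ x x₀ ≤ 1 / β * Real.log (1 / δ x) + c) :
    ∃ C, 0 < C ∧ ∀ x ∈ G, ∃ L γ, IsCuspCurve G δ β C γ L x x₀ := by
  have := hδ.pos x₀ hx₀
  set K := Real.exp (β * (c + 1)) with hK
  refine ⟨max (|c| + 1) (K / β / δ x₀ ^ β), by positivity, fun x hx => ?_⟩
  obtain ⟨L, γ, hγ, hgeod⟩ := exists_nearGeodesic hδ hG hx
  refine ⟨L, γ, hγ, ?_, fun s hs => ?_⟩
  · have hlen := hgeod 0 ⟨le_rfl, hγ.length_nonneg⟩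
    rw [hγ.source] at hlen
    linarith [hqh x hx, le_max_left (|c| + 1) (K / β / δ x₀ ^ β), le_abs_self c]
  · have hdecay : ∀ s ∈ Set.Icc 0 L, δ (γ s) ≤ K * Real.exp (-β * qhLength δ γ s L) := by
      intro s hs
      have hle := (hgeod s hs).trans (add_le_add_left (hqh _ (hγ.mem s)) 1)
      rw [one_div (δ (γ s)), Real.log_inv, one_div_mul_eq_div, add_assoc, ← sub_le_iff_le_add,
        le_div_iff₀ hβ] at hle
      rw [hK, ← Real.exp_add, ← Real.log_le_iff_le_exp (hδ.pos _ (hγ.mem s))]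
      linarith
    calc s ≤ K / β * Real.exp (-β * qhLength δ γ s L) :=
          hγ.sub_le_mul_exp_qhLength hδ hβ (Real.exp_pos _).le hdecay hs
      _ ≤ K / β * (δ (γ s) ^ β / δ (γ L) ^ β) := by gcongr; exact hγ.exp_qhLength_le hδ hβ hs.2
      _ = K / β / δ x₀ ^ β * δ (γ s) ^ β := by rw [hγ.target]; ring
      _ ≤ _ := by
        gcongr
        · exact Real.rpow_nonneg (hδ.pos _ (hγ.mem s)).le _
        · exact le_max_right _ _

theorem edist_le_of_forall_integral_le {g : ℝ → ℝ} (hg : Continuous g) {f : ℝ → X} {L c : ℝ}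
    (hc : 0 ≤ c) {K : ℝ≥0∞} (hf : ∀ s ∈ Set.Icc 0 L, ∀ t ∈ Set.Icc 0 L, s ≤ t →
      ∫ r in s..t, g r ≤ c → edist (f s) (f t) ≤ K) (m : ℕ) :
    ∀ s ∈ Set.Icc 0 L, ∫ r in 0..s, g r ≤ (m + 1) * c → edist (f 0) (f s) ≤ (m + 1) * K := by
  induction m with
  | zero =>
    intro s hs hint
    simpa using hf 0 ⟨le_rfl, hs.1.trans hs.2⟩ s hs hs.1 (by simpa using hint)
  | succ m ih =>
    intro s hs hint
    rcases le_total (∫ r in 0..s, g r) ((m + 1) * c) with h | h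
    · refine (ih s hs h).trans ?_
      gcongr
      exact m.le_succ
    · obtain ⟨t, ht, htint⟩ := intermediate_value_Icc hs.1
        (intervalIntegral.continuous_primitive hg.intervalIntegrable 0).continuousOn
        (show (m + 1) * c ∈ _ from ⟨by simp only [intervalIntegral.integral_same]; positivity, h⟩)
      have htL : t ∈ Set.Icc 0 L := ⟨ht.1, ht.2.trans hs.2⟩
      have hadd := intervalIntegral.integral_add_adjacent_intervals (μ := volume)
        (hg.intervalIntegrable 0 t) (hg.intervalIntegrable t s)
      push_cast at hint ⊢
      calc edist (f 0) (f s) ≤ edist (f 0) (f t) + edist (f t) (f s) := edist_triangle _ _ _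
        _ ≤ (m + 1) * K + K := add_le_add (ih t htL htint.le) (hf t htL s hs ht.2 (by linarith))
        _ = (m + 1 + 1) * K := by ring

end Curves

section CurvesInNormedSpace

variable {E : Type*} [NormedAddCommGroup E] [NormedSpace ℝ E] {G : Set E}

theorem exists_isLipCurve_of_segment_subset {x y : E} (hxy : segment ℝ x y ⊆ G) :
    ∃ L γ, IsLipCurve G γ L x y := by
  rcases eq_or_ne x y with rfl | hne
  · exact ⟨0, fun _ => x, le_rfl, LipschitzWith.const' x, rfl, rfl,
      fun _ => hxy (left_mem_segment ℝ x x)⟩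
  have hpos : 0 < ‖y - x‖ := norm_pos_iff.2 (sub_ne_zero.2 hne.symm)
  set γ : ℝ → E := fun t => x + (t * ‖y - x‖⁻¹) • (y - x) with hγ
  have hlip : LipschitzWith 1 γ := LipschitzWith.mk_one fun s t => by
    rw [dist_add_left, dist_eq_norm, ← sub_smul, norm_smul, ← sub_mul, norm_mul, norm_inv,
      norm_norm, inv_mul_cancel_right₀ hpos.ne', dist_eq_norm]
  have hmem : ∀ t ∈ Set.Icc 0 ‖y - x‖, γ t ∈ G := fun t ht => hxy <| by
    rw [segment_eq_image']
    exact ⟨t * ‖y - x‖⁻¹, ⟨by have := ht.1; positivity, mul_inv_le_one_of_le₀ ht.2 hpos.le⟩,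
      rfl⟩
  obtain ⟨η, hη, -⟩ := exists_isLipCurve_of_mapsTo_Icc hpos.le hlip hmem
  have h₀ : γ 0 = x := by simp [hγ]
  have h₁ : γ ‖y - x‖ = y := by simp [hγ, hpos.ne']
  rw [h₀, h₁] at hη
  exact ⟨‖y - x‖, η, hη⟩

theorem exists_isLipCurve (hGo : IsOpen G) (hGc : IsPreconnected G) {x y : E} (hx : x ∈ G)
    (hy : y ∈ G) : ∃ L γ, IsLipCurve G γ L x y := by
  refine hGc.induction₂' (fun x y => ∃ L γ, IsLipCurve G γ L x y) (fun x hx => ?_) ?_ hx hy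
  · obtain ⟨r, hr, hball⟩ := Metric.isOpen_iff.1 hGo x hx
    filter_upwards [mem_nhdsWithin_of_mem_nhds (Metric.ball_mem_nhds x hr)] with y hy
    have hconv := convex_ball x r
    have hx := Metric.mem_ball_self hr (x := x)
    exact ⟨exists_isLipCurve_of_segment_subset ((hconv.segment_subset hx hy).trans hball),
      exists_isLipCurve_of_segment_subset ((hconv.segment_subset hy hx).trans hball)⟩
  · rintro x y z - - - ⟨L, γ, hγ⟩ ⟨L', η, hη⟩
    exact ⟨_, _, hγ.concat hη⟩

end CurvesInNormedSpace

theorem qhDist_eq_gaugeDist {n : ℕ} (G : Set (EuclideanSpace ℝ (Fin n)))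
    (x y : EuclideanSpace ℝ (Fin n)) :
    qhDist G x y = gaugeDist G (fun z => Metric.infDist z (frontier G)) x y := by
  rw [qhDist, gaugeDist]
  congr 1 with v
  constructor
  · rintro ⟨L, γ, hL, hγ, rfl, rfl, hG, rfl⟩
    obtain ⟨η, hη, heq⟩ := exists_isLipCurve_of_mapsTo_Icc hL hγ hG
    refine ⟨L, η, hη, intervalIntegral.integral_congr fun t ht => ?_⟩
    rw [heq (Set.uIcc_of_le hL ▸ ht)]
  · rintro ⟨L, γ, hγ, rfl⟩
    exact ⟨L, γ, hγ.length_nonneg, hγ.lipschitzWith, hγ.source, hγ.target, fun t _ => hγ.mem t, rfl⟩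

section Tonelli

variable {α : Type*} [MeasurableSpace α] {μ : Measure α} [SFinite μ]

theorem setLIntegral_setLIntegral_swap {α' : Type*} [MeasurableSpace α'] {ν : Measure α'}
    [SFinite ν] {S : Set (α × α')} (hS : MeasurableSet S) {f : α → α' → ℝ≥0∞}
    (hf : Measurable (Function.uncurry f)) :
    ∫⁻ x, ∫⁻ y in {y | (x, y) ∈ S}, f x y ∂ν ∂μ = ∫⁻ y, ∫⁻ x in {x | (x, y) ∈ S}, f x y ∂μ ∂ν := by
  have hleft : ∀ x, ∫⁻ y in {y | (x, y) ∈ S}, f x y ∂ν =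
      ∫⁻ y, S.indicator (Function.uncurry f) (x, y) ∂ν := fun x =>
    (lintegral_indicator (measurable_prodMk_left hS) _).symm
  have hright : ∀ y, ∫⁻ x in {x | (x, y) ∈ S}, f x y ∂μ =
      ∫⁻ x, S.indicator (Function.uncurry f) (x, y) ∂μ := fun y =>
    (lintegral_indicator (measurable_prodMk_right hS) _).symm
  simp_rw [hleft, hright]
  exact lintegral_lintegral_swap (hf.indicator hS).aemeasurable

theorem measurable_setLIntegral_prodMk_left {α' : Type*} [MeasurableSpace α'] {ν : Measure α'}
    [SFinite ν] {S : Set (α × α')} (hS : MeasurableSet S) {f : α → α' → ℝ≥0∞}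
    (hf : Measurable (Function.uncurry f)) :
    Measurable fun x => ∫⁻ y in {y | (x, y) ∈ S}, f x y ∂ν := by
  have hleft : ∀ x, ∫⁻ y in {y | (x, y) ∈ S}, f x y ∂ν =
      ∫⁻ y, S.indicator (Function.uncurry f) (x, y) ∂ν := fun x =>
    (lintegral_indicator (measurable_prodMk_left hS) _).symm
  simp_rw [hleft]
  exact (hf.indicator hS).lintegral_prod_right'

-- Split `∫∫ F(y)^s` according to which of `f v ≤ f y` and `f y ≤ f v` holds, and swap in the second
-- part, where `F(y) ≤ F(v)`.
theorem lintegral_measure_sublevel_pow_mul_univ_le {f : α → ℝ} (hf : Measurable f) (s : ℕ) :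
    (∫⁻ y, μ {v | f v ≤ f y} ^ s ∂μ) * μ Set.univ ≤
      2 * ∫⁻ y, μ {v | f v ≤ f y} ^ (s + 1) ∂μ := by
  have hS : MeasurableSet {p : α × α | f p.1 ≤ f p.2} :=
    measurableSet_le (hf.comp measurable_fst) (hf.comp measurable_snd)
  set F : α → ℝ≥0∞ := fun y => μ {v | f v ≤ f y}
  have hFm : Measurable F := measurable_measure_prodMk_left (ν := μ) (hS.preimage measurable_swap)
  calc (∫⁻ y, F y ^ s ∂μ) * μ Set.univ
      = ∫⁻ y, ∫⁻ _ in {v | f v ≤ f y} ∪ {v | f y ≤ f v}, F y ^ s ∂μ ∂μ := by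
        have hunion : ∀ y, {v | f v ≤ f y} ∪ {v | f y ≤ f v} = Set.univ := fun y =>
          Set.eq_univ_of_forall fun v => le_total (f v) (f y)
        simp_rw [hunion, setLIntegral_const]
        exact (lintegral_mul_const _ (hFm.pow_const s)).symm
    _ ≤ ∫⁻ y, (F y ^ (s + 1) + ∫⁻ _ in {v | f y ≤ f v}, F y ^ s ∂μ) ∂μ := by
        gcongr with y
        refine (lintegral_union_le _ _ _).trans_eq ?_
        rw [setLIntegral_const, pow_succ]
    _ = ∫⁻ y, F y ^ (s + 1) ∂μ + ∫⁻ v, ∫⁻ y in {y | f y ≤ f v}, F y ^ s ∂μ ∂μ := by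
        rw [lintegral_add_left (hFm.pow_const _)]
        congr 1
        exact setLIntegral_setLIntegral_swap hS ((hFm.comp measurable_fst).pow_const s)
    _ ≤ ∫⁻ y, F y ^ (s + 1) ∂μ + ∫⁻ v, F v ^ (s + 1) ∂μ := by
        gcongr with v
        calc ∫⁻ y in {y | f y ≤ f v}, F y ^ s ∂μ ≤ ∫⁻ _ in {y | f y ≤ f v}, F v ^ s ∂μ :=
              setLIntegral_mono measurable_const fun y (hy : f y ≤ f v) => by
                gcongr
                exact measure_mono fun w (hw : f w ≤ f y) => hw.trans hy
          _ = F v ^ (s + 1) := by rw [setLIntegral_const, pow_succ]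
    _ = 2 * ∫⁻ y, F y ^ (s + 1) ∂μ := (two_mul _).symm

theorem measure_univ_pow_succ_le {f : α → ℝ} (hf : Measurable f) (s : ℕ) :
    μ Set.univ ^ (s + 1) ≤ 2 ^ s * ∫⁻ y, μ {v | f v ≤ f y} ^ s ∂μ := by
  induction s with
  | zero => simp
  | succ s ih =>
    calc μ Set.univ ^ (s + 1 + 1)
        ≤ (2 ^ s * ∫⁻ y, μ {v | f v ≤ f y} ^ s ∂μ) * μ Set.univ := by rw [pow_succ]; gcongr
      _ ≤ 2 ^ s * (2 * ∫⁻ y, μ {v | f v ≤ f y} ^ (s + 1) ∂μ) := by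
        rw [mul_assoc]
        gcongr 2 ^ s * ?_
        exact lintegral_measure_sublevel_pow_mul_univ_le hf s
      _ = 2 ^ (s + 1) * ∫⁻ y, μ {v | f v ≤ f y} ^ (s + 1) ∂μ := by rw [pow_succ, mul_assoc]

theorem measure_pow_succ_le_setLIntegral {f : α → ℝ} (hf : Measurable f) {S : Set α}
    (hS : MeasurableSet S) (s : ℕ) :
    μ S ^ (s + 1) ≤ 2 ^ s * ∫⁻ y in S, μ (S ∩ {v | f v ≤ f y}) ^ s ∂μ := by
  have h := measure_univ_pow_succ_le (μ := μ.restrict S) hf s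
  simp only [Measure.restrict_apply' hS, Set.univ_inter] at h
  simpa only [Set.inter_comm S] using h

end Tonelli

section QhVolume

variable {X : Type*} [PseudoMetricSpace X] [MeasurableSpace X]

/-- The measure on `G` with density `y ↦ (μ (ball y (δ y)))⁻¹` with respect to `μ`. For Lebesgue
measure in dimension `n` this density is a multiple of `δ y ^ (-n)`, so for `δ` the distance to the
boundary it is the quasihyperbolic volume up to a constant factor. -/
noncomputable def qhVolume (μ : Measure X) (G : Set X) (δ : X → ℝ) : Measure X :=
  (μ.restrict G).withDensity fun y => (μ (Metric.ball y (δ y)))⁻¹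

instance (μ : Measure X) [SFinite μ] (G : Set X) (δ : X → ℝ) : SFinite (qhVolume μ G δ) := by
  unfold qhVolume
  infer_instance

/-- The points `y` whose ball of radius `δ y`, dilated by `lam`, contains `x`: the analogue for `G`
of a nontangential approach region. -/
def approachRegion (δ : X → ℝ) (lam : ℝ) (x : X) : Set X := {y | dist x y < lam * δ y}

variable {μ : Measure X} {G : Set X} {δ : X → ℝ}

theorem ae_qhVolume_mem (hG : MeasurableSet G) : ∀ᵐ y ∂qhVolume μ G δ, y ∈ G :=
  (withDensity_absolutelyContinuous _ _).ae_le (ae_restrict_mem hG)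

variable [OpensMeasurableSpace X] [SecondCountableTopology X]

theorem measurable_measure_ball [SFinite μ] {ρ : X → ℝ} (hρ : Measurable ρ) :
    Measurable fun y => μ (Metric.ball y (ρ y)) :=
  measurable_measure_prodMk_left (ν := μ) (s := {p : X × X | dist p.2 p.1 < ρ p.1})
    (measurableSet_lt (by fun_prop) (by fun_prop))

theorem setLIntegral_measure_ball_qhVolume_le [SFinite μ] (hδ : Measurable δ) {A : Set X}
    (hA : MeasurableSet A) : ∫⁻ y in A, μ (Metric.ball y (δ y)) ∂qhVolume μ G δ ≤ μ A := by
  rw [qhVolume, restrict_withDensity hA, Measure.restrict_restrict hA]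
  calc _ ≤ ∫⁻ y in A ∩ G, (μ (Metric.ball y (δ y)))⁻¹ * μ (Metric.ball y (δ y)) ∂μ :=
        lintegral_withDensity_le_lintegral_mul _ (measurable_measure_ball hδ).inv _
    _ ≤ ∫⁻ _ in A ∩ G, 1 ∂μ := lintegral_mono fun _ => ENNReal.inv_mul_le_one _
    _ ≤ μ A := by
      rw [setLIntegral_one]
      exact measure_mono Set.inter_subset_left

theorem measurableSet_prod_approachRegion (hδ : Measurable δ) (lam : ℝ) :
    MeasurableSet {p : X × X | p.2 ∈ approachRegion δ lam p.1} :=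
  measurableSet_lt (f := fun p : X × X => dist p.1 p.2) (g := fun p => lam * δ p.2)
    (by fun_prop) (by fun_prop)

theorem measurableSet_approachRegion (hδ : Measurable δ) (lam : ℝ) (x : X) :
    MeasurableSet (approachRegion δ lam x) :=
  measurable_prodMk_left (measurableSet_prod_approachRegion hδ lam)

theorem measurable_measure_approachRegion_inter {ν : Measure X} [SFinite ν] (hδ : Measurable δ)
    (lam : ℝ) :
    Measurable fun p : X × X => ν (approachRegion δ lam p.1 ∩ {v | δ v ≤ δ p.2}) := by
  have hregion : MeasurableSet {p : (X × X) × X | dist p.1.1 p.2 < lam * δ p.2} :=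
    measurableSet_lt (by fun_prop) (by fun_prop)
  have hsublevel : MeasurableSet {p : (X × X) × X | δ p.2 ≤ δ p.1.2} :=
    measurableSet_le (by fun_prop) (by fun_prop)
  exact measurable_measure_prodMk_left (hregion.inter hsublevel)

end QhVolume

section Moments

variable {E : Type*} [NormedAddCommGroup E] [NormedSpace ℝ E] [FiniteDimensional ℝ E]
  [MeasurableSpace E] [BorelSpace E] {μ : Measure E} [μ.IsAddHaarMeasure] {G : Set E} {δ : E → ℝ}

theorem addHaar_ball_mul_eq (x y : E) {r : ℝ} (hr : 0 < r) (s : ℝ) :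
    μ (Metric.ball x (r * s)) =
      ENNReal.ofReal r ^ Module.finrank ℝ E * μ (Metric.ball y s) := by
  rw [Measure.addHaar_ball_mul_of_pos μ x hr, Measure.addHaar_ball_center μ y,
    ENNReal.ofReal_pow hr.le]

theorem setLIntegral_approachRegion_pow_le_indicator {ν : Measure E} {lam : ℝ} (hlam : 1 ≤ lam)
    {s : ℕ} {C : ℝ≥0∞} (hC : ∀ (z : E) (R t : ℝ), t ≤ R →
      ∫⁻ x in Metric.ball z R, ν (approachRegion δ lam x ∩ {v | δ v ≤ t}) ^ s ∂μ ≤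
        C * μ (Metric.ball z R)) (z : E) {R t : ℝ} (htR : t ≤ R) {y : E} (hy : 0 < δ y) :
    ∫⁻ x in {x | y ∈ approachRegion δ lam x ∩ {v | δ v ≤ t}},
        ν (approachRegion δ lam x ∩ {v | δ v ≤ δ y}) ^ s ∂μ.restrict (Metric.ball z R) ≤
      (Metric.ball z ((1 + lam) * R)).indicator (fun y =>
        C * ENNReal.ofReal lam ^ Module.finrank ℝ E * μ (Metric.ball y (δ y))) y := by
  set A := {x | y ∈ approachRegion δ lam x ∩ {v | δ v ≤ t}}
  rw [Measure.restrict_restrict₀' measurableSet_ball.nullMeasurableSet]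
  rcases (A ∩ Metric.ball z R).eq_empty_or_nonempty with hempty | ⟨x, ⟨hxy, hyt⟩, hx⟩
  · rw [hempty, setLIntegral_empty]
    exact zero_le
  have hy_mem : y ∈ Metric.ball z ((1 + lam) * R) := by
    have hyR : lam * δ y ≤ lam * R := by gcongr; exact hyt.out.trans htR
    have hxy : dist x y < lam * δ y := hxy
    rw [Metric.mem_ball] at hx ⊢
    rw [dist_comm] at hxy
    linarith [dist_triangle y x z]
  rw [Set.indicator_of_mem hy_mem, mul_assoc, ← addHaar_ball_mul_eq y y (by linarith)]
  calc _ ≤ ∫⁻ x in Metric.ball y (lam * δ y),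
        ν (approachRegion δ lam x ∩ {v | δ v ≤ δ y}) ^ s ∂μ :=
        lintegral_mono_set fun x hx => hx.1.1
    _ ≤ C * μ (Metric.ball y (lam * δ y)) := hC y _ _ (le_mul_of_one_le_left hy.le hlam)

-- The `s`-th power is unfolded as an `s`-fold integral over `y₁, …, yₛ` with `δ y₁ ≤ … ≤ δ yₛ`;
-- integrating out `x`, `y₁`, `y₂`, … one after the other costs a constant factor each time.
theorem exists_setLIntegral_approachRegion_pow_le (hG : MeasurableSet G) (hδ : Measurable δ)
    (hpos : ∀ x ∈ G, 0 < δ x) {lam : ℝ} (hlam : 1 ≤ lam) (s : ℕ) :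
    ∃ C : ℝ≥0∞, C ≠ ⊤ ∧ ∀ (z : E) (R t : ℝ), t ≤ R →
      ∫⁻ x in Metric.ball z R, qhVolume μ G δ (approachRegion δ lam x ∩ {v | δ v ≤ t}) ^ s ∂μ ≤
        C * μ (Metric.ball z R) := by
  set ν := qhVolume μ G δ
  set n := Module.finrank ℝ E
  induction s with
  | zero => exact ⟨1, ENNReal.one_ne_top, fun z R t _ => by simp⟩
  | succ s ih =>
    obtain ⟨C, hC, ih⟩ := ih
    refine ⟨2 ^ s * (C * ENNReal.ofReal lam ^ n * ENNReal.ofReal (1 + lam) ^ n), by finiteness,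
      fun z R t htR => ?_⟩
    have hregion : MeasurableSet {p : E × E | p.2 ∈ approachRegion δ lam p.1 ∩ {v | δ v ≤ t}} :=
      (measurableSet_prod_approachRegion hδ lam).inter
        (measurableSet_le (hδ.comp measurable_snd) measurable_const)
    calc ∫⁻ x in Metric.ball z R, ν (approachRegion δ lam x ∩ {v | δ v ≤ t}) ^ (s + 1) ∂μ
        ≤ ∫⁻ x in Metric.ball z R, 2 ^ s * ∫⁻ y in approachRegion δ lam x ∩ {v | δ v ≤ t},
            ν (approachRegion δ lam x ∩ {v | δ v ≤ δ y}) ^ s ∂ν ∂μ := by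
          gcongr with x
          refine (measure_pow_succ_le_setLIntegral hδ
            ((measurableSet_approachRegion hδ lam x).inter
              (measurableSet_le hδ measurable_const)) s).trans ?_
          gcongr with y
          exact Set.inter_subset_left
      _ = 2 ^ s * ∫⁻ y, ∫⁻ x in {x | y ∈ approachRegion δ lam x ∩ {v | δ v ≤ t}},
            ν (approachRegion δ lam x ∩ {v | δ v ≤ δ y}) ^ s ∂μ.restrict (Metric.ball z R) ∂ν := by
          rw [lintegral_const_mul' _ _ (by finiteness)]
          congr 1
          exact setLIntegral_setLIntegral_swap hregion
            ((measurable_measure_approachRegion_inter hδ lam).pow_const s)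
      _ ≤ 2 ^ s * ∫⁻ y in Metric.ball z ((1 + lam) * R),
            C * ENNReal.ofReal lam ^ n * μ (Metric.ball y (δ y)) ∂ν := by
          rw [← lintegral_indicator measurableSet_ball]
          gcongr 2 ^ s * ?_
          exact lintegral_mono_ae <| (ae_qhVolume_mem hG).mono fun y hy =>
            setLIntegral_approachRegion_pow_le_indicator hlam ih z htR (hpos y hy)
      _ ≤ _ := by
          rw [lintegral_const_mul _ (measurable_measure_ball hδ), mul_assoc (2 ^ s),
            mul_assoc (C * _), ← addHaar_ball_mul_eq z z (by linarith)]
          gcongr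
          exact setLIntegral_measure_ball_qhVolume_le hδ measurableSet_ball

theorem lintegral_approachRegion_pow_ne_top (hδ : IsBoundaryGauge G δ)
    (hGb : Bornology.IsBounded G) {lam : ℝ} (hlam : 1 ≤ lam) (s : ℕ) :
    ∫⁻ x in G, qhVolume μ G δ (approachRegion δ lam x) ^ s ∂μ ≠ ⊤ := by
  obtain ⟨D, hD⟩ := (hδ.lipschitzWith.isBounded_image hGb).bddAbove
  obtain ⟨R, hR⟩ := hGb.subset_ball 0
  have hG := hδ.isOpen.measurableSet
  obtain ⟨C, hC, hmoment⟩ := exists_setLIntegral_approachRegion_pow_le (μ := μ) hG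
    hδ.continuous.measurable hδ.pos hlam s
  refine ne_top_of_le_ne_top (ENNReal.mul_ne_top hC (measure_ball_lt_top (μ := μ)).ne) <|
    (lintegral_mono_set (hR.trans (Metric.ball_subset_ball (le_max_left R D)))).trans <|
    (lintegral_mono fun x => ?_).trans (hmoment 0 (max R D) D (le_max_right R D))
  gcongr ?_ ^ s
  refine measure_mono_ae ((ae_qhVolume_mem hG).mono fun y hy hxy => ⟨hxy, ?_⟩)
  exact hD (Set.mem_image_of_mem δ hy)

theorem lintegral_one_add_approachRegion_rpow_ne_top (hδ : IsBoundaryGauge G δ)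
    (hGb : Bornology.IsBounded G) {lam : ℝ} (hlam : 1 ≤ lam) (r : ℝ) :
    ∫⁻ x in G, (1 + qhVolume μ G δ (approachRegion δ lam x)) ^ r ∂μ ≠ ⊤ := by
  have hpow : ∀ a : ℝ≥0∞, (1 + a) ^ r ≤ 2 ^ (⌈r⌉₊ : ℝ) * (1 + a ^ (⌈r⌉₊ + 1)) := fun a => by
    calc (1 + a) ^ r ≤ (1 + a) ^ ((⌈r⌉₊ : ℝ) + 1) :=
          ENNReal.rpow_le_rpow_of_exponent_le le_self_add ((Nat.le_ceil r).trans (by linarith))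
      _ ≤ 2 ^ ((⌈r⌉₊ : ℝ) + 1 - 1) * (1 ^ ((⌈r⌉₊ : ℝ) + 1) + a ^ ((⌈r⌉₊ : ℝ) + 1)) :=
          ENNReal.rpow_add_le_mul_rpow_add_rpow _ _ (by linarith [(⌈r⌉₊).cast_nonneg (α := ℝ)])
      _ = _ := by rw [ENNReal.one_rpow, add_sub_cancel_right]; norm_cast
  refine ne_top_of_le_ne_top ?_ (lintegral_mono fun x => hpow _)
  rw [lintegral_const_mul' _ _ (by finiteness), lintegral_add_left measurable_const,
    setLIntegral_one]
  exact ENNReal.mul_ne_top (by finiteness) <| ENNReal.add_ne_top.2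
    ⟨hGb.measure_lt_top.ne, lintegral_approachRegion_pow_ne_top hδ hGb hlam _⟩

end Moments

section LogarithmicBound

variable {E : Type*} [NormedAddCommGroup E] [NormedSpace ℝ E] [FiniteDimensional ℝ E]
  [MeasurableSpace E] [BorelSpace E] {μ : Measure E} [μ.IsAddHaarMeasure] {G : Set E} {δ : E → ℝ}

theorem ofReal_div_pow_le_qhVolume_ball {p : E} {r R : ℝ} (hr : 0 < r) (hR : 0 < R)
    (hG : Metric.ball p r ⊆ G) (hδR : ∀ y ∈ Metric.ball p r, δ y ≤ R) :
    ENNReal.ofReal (r / R) ^ Module.finrank ℝ E ≤ qhVolume μ G δ (Metric.ball p r) := by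
  have hpos : μ (Metric.ball p R) ≠ 0 := (Metric.measure_ball_pos μ p hR).ne'
  calc ENNReal.ofReal (r / R) ^ Module.finrank ℝ E
      = (μ (Metric.ball p R))⁻¹ * μ (Metric.ball p r) := by
        rw [← ENNReal.div_eq_inv_mul, ENNReal.eq_div_iff hpos measure_ball_lt_top.ne, mul_comm,
          ← addHaar_ball_mul_eq p p (by positivity), div_mul_cancel₀ r hR.ne']
    _ = ∫⁻ _ in Metric.ball p r, (μ (Metric.ball p R))⁻¹ ∂μ := (setLIntegral_const _ _).symm
    _ ≤ ∫⁻ y in Metric.ball p r, (μ (Metric.ball y (δ y)))⁻¹ ∂μ :=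
        setLIntegral_mono' measurableSet_ball fun y hy => by
          rw [Measure.addHaar_ball_center μ p, Measure.addHaar_ball_center μ y]
          gcongr
          exact hδR y hy
    _ = qhVolume μ G δ (Metric.ball p r) := by
        rw [qhVolume, withDensity_apply _ measurableSet_ball,
          Measure.restrict_restrict measurableSet_ball, Set.inter_eq_left.2 hG]

theorem qhVolume_approachRegion_inter_ball_add_le (hδ : IsBoundaryGauge G δ) {Λ : ℝ} (hΛ : 1 ≤ Λ)
    {x p : E} (hp : p ∈ G) {t : ℝ} (ht : 0 < t) (hxt : δ x ≤ t) (hxp : 3 * t / 4 ≤ dist x p)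
    (hpx : dist x p ≤ 5 * t / 4) (htp : t / (4 * Λ) ≤ δ p) :
    qhVolume μ G δ (approachRegion δ (16 * Λ) x ∩ Metric.ball x (t / 2)) +
        ENNReal.ofReal (1 / (24 * Λ)) ^ Module.finrank ℝ E ≤
      qhVolume μ G δ (approachRegion δ (16 * Λ) x ∩ Metric.ball x (4 * t)) := by
  have : 0 < Λ := by linarith
  set r := t / (8 * Λ) with hr
  have hr₀ : 0 < r := by positivity
  have hrt : r ≤ t / 8 := div_le_div_of_nonneg_left ht.le (by norm_num) (by linarith)
  have htr : t / (4 * Λ) = 2 * r := by rw [hr]; field_simp; norm_num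
  have hball : ∀ y ∈ Metric.ball p r,
      δ y ≤ 3 * t ∧ r ≤ δ y ∧ t / 2 < dist x y ∧ dist x y < 2 * t := by
    intro y hy
    rw [Metric.mem_ball] at hy
    have hpy := hδ.le_add_dist p y
    have hyx := hδ.le_add_dist y x
    rw [dist_comm p y] at hpy
    rw [dist_comm y x] at hyx
    refine ⟨?_, ?_, ?_, ?_⟩ <;>
      linarith [dist_triangle_left x p y, dist_triangle_right x p y, dist_triangle x p y,
        dist_comm y p, dist_triangle x y p]
  have hratio : 1 / (24 * Λ) = r / (3 * t) := by rw [hr]; field_simp; norm_num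
  rw [hratio]
  refine (add_le_add_right (ofReal_div_pow_le_qhVolume_ball (μ := μ) hr₀ (by positivity)
    ((Metric.ball_subset_ball (by linarith)).trans (hδ.ball_subset p hp))
    fun y hy => (hball y hy).1) _).trans ?_
  rw [← measure_union (Set.disjoint_left.2 fun y hy hyp => ?_) measurableSet_ball]
  · refine measure_mono (Set.union_subset (Set.inter_subset_inter_right _
      (Metric.ball_subset_ball (by linarith))) fun y hy => ?_)
    obtain ⟨-, hry, -, hxy⟩ := hball y hy
    have hty : 16 * Λ * r = 2 * t := by rw [hr]; field_simp; norm_num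
    refine ⟨hxy.trans_le ?_, Metric.mem_ball'.2 (by linarith)⟩
    rw [← hty]
    gcongr
  · exact (Metric.mem_ball'.1 hy.2).not_gt (hball y hyp).2.2.1

-- In each of the annuli `8 ^ j * δ x ≤ dist x z ≤ 8 ^ (j + 1) * δ x` the curve either collects
-- `qhLength` at least `Λ`, or meets the approach region in a set of volume bounded below.
theorem ofReal_sub_qhLength_div_le (hδ : IsBoundaryGauge G δ) {γ : ℝ → E} {L : ℝ} {x y : E}
    (hγ : IsLipCurve G γ L x y) {Λ : ℝ} (hΛ : 1 ≤ Λ) {c : ℝ≥0∞}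
    (hc : 1 ≤ c * ENNReal.ofReal (1 / (24 * Λ)) ^ Module.finrank ℝ E) (J : ℕ) :
    ∀ r, 0 ≤ r → 8 ^ J * δ x ≤ dist x (γ r) → ENNReal.ofReal (J - qhLength δ γ 0 r / Λ) ≤
      c * qhVolume μ G δ
        (approachRegion δ (16 * Λ) x ∩ Metric.ball x (8 ^ J * δ x / 2)) := by
  have hΛ₀ : 0 < Λ := by linarith
  have hx : 0 < δ x := hγ.source ▸ hδ.pos _ (hγ.mem 0)
  induction J with
  | zero =>
    intro r hr _
    have := hγ.qhLength_nonneg hδ hr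
    rw [ENNReal.ofReal_of_nonpos (by rw [CharP.cast_eq_zero, zero_sub, neg_nonpos]; positivity)]
    exact zero_le
  | succ J ih =>
    intro r hr hJr
    set t := 8 ^ J * δ x with ht
    have h₈t : 8 ^ (J + 1) * δ x = 8 * t := by rw [ht, pow_succ']; ring
    rw [h₈t] at hJr ⊢
    obtain ⟨s, hs, hst, hlong | ⟨hsr, p, hp, hxp, hpx, htp⟩⟩ :=
      hγ.exists_le_dist_and_qhLength_le_or_le hδ hΛ₀ (by positivity) hr hJr
    · have hle : ((J + 1 : ℕ) : ℝ) - qhLength δ γ 0 r / Λ ≤ J - qhLength δ γ 0 s / Λ := by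
        have := div_le_div_of_nonneg_right hlong hΛ₀.le
        rw [add_div, div_self hΛ₀.ne'] at this
        push_cast
        linarith
      refine (ENNReal.ofReal_le_ofReal hle).trans ((ih s hs hst).trans ?_)
      gcongr
      linarith [show 0 < t by positivity]
    · calc ENNReal.ofReal (((J + 1 : ℕ) : ℝ) - qhLength δ γ 0 r / Λ)
          ≤ ENNReal.ofReal (J - qhLength δ γ 0 s / Λ + 1) := by
            push_cast
            rw [sub_add_eq_add_sub]
            gcongr
        _ ≤ ENNReal.ofReal (J - qhLength δ γ 0 s / Λ) + 1 := by
            simpa only [ENNReal.ofReal_one] using ENNReal.ofReal_add_le (q := 1)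
        _ ≤ _ := add_le_add (ih s hs hst) hc
        _ ≤ _ := by
          rw [← mul_add, show 8 * t / 2 = 4 * t by ring]
          gcongr
          exact qhVolume_approachRegion_inter_ball_add_le hδ hΛ hp (by positivity)
            (le_mul_of_one_le_left hx.le (one_le_pow₀ (by norm_num))) hxp hpx htp

theorem log_one_div_le_of_lt_pow_mul {β C : ℝ} (hβ : 0 < β) {Λ : ℝ} (hΛ : 0 < Λ)
    (hΛβ : 2 * Real.log 8 / β ≤ Λ) {d q : ℝ} (hd : 0 < d) (hd₁ : 0 ≤ Real.log (1 / d))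
    (hq : q ≤ 1 / β * Real.log (1 / d) + C) {J : ℕ} {a : ℝ} (ha : 0 < a)
    (hJ : a < 8 ^ (J + 1) * d) :
    Real.log (1 / d) ≤
      2 * Real.log 8 * (J - q / Λ) + 2 * (Real.log 8 * (1 + C / Λ) - Real.log a) := by
  set l := Real.log (1 / d)
  have : 0 < Real.log 8 := Real.log_pos (by norm_num)
  have hJl : Real.log a ≤ (J + 1) * Real.log 8 - l := by
    have := Real.log_le_log ha hJ.le
    rwa [Real.log_mul (by positivity) hd.ne', Real.log_pow, ← sub_neg_eq_add, ← Real.log_inv,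
      ← one_div, Nat.cast_add_one] at this
  have hqΛ : Real.log 8 * (q / Λ) ≤ l / 2 + Real.log 8 * (C / Λ) := by
    have hratio : 2 * Real.log 8 / β * l ≤ Λ * l := by gcongr
    calc Real.log 8 * (q / Λ) ≤ Real.log 8 * ((1 / β * l + C) / Λ) := by gcongr
      _ = 2 * Real.log 8 / β * l / (2 * Λ) + Real.log 8 * (C / Λ) := by field_simp
      _ ≤ Λ * l / (2 * Λ) + Real.log 8 * (C / Λ) := by gcongr
      _ = l / 2 + Real.log 8 * (C / Λ) := by field_simp
  linarith

theorem ofReal_log_le_qhVolume_approachRegion (hδ : IsBoundaryGauge G δ) {β C : ℝ} (hβ : 0 < β)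
    {γ : ℝ → E} {L : ℝ} {x x₀ : E} (hγ : IsCuspCurve G δ β C γ L x x₀) {Λ : ℝ} (hΛ : 1 ≤ Λ)
    (hΛβ : 2 * Real.log 8 / β ≤ Λ) (hx : δ x < δ x₀ / 2) (hx₁ : 0 ≤ Real.log (1 / δ x)) :
    ENNReal.ofReal (Real.log (1 / δ x)) ≤ ENNReal.ofReal (2 * Real.log 8) *
        ((ENNReal.ofReal (1 / (24 * Λ)) ^ Module.finrank ℝ E)⁻¹ *
          qhVolume μ G δ (approachRegion δ (16 * Λ) x)) +
      ENNReal.ofReal (2 * (Real.log 8 * (1 + C / Λ) - Real.log (δ x₀ / 2))) := by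
  have : 0 < Real.log 8 := Real.log_pos (by norm_num)
  have hpos : 0 < δ x := hγ.source ▸ hδ.pos _ (hγ.mem 0)
  obtain ⟨J, hJ, hJ'⟩ := exists_nat_pow_near ((one_le_div hpos).2 hx.le)
    (show (1 : ℝ) < 8 by norm_num)
  rw [le_div_iff₀ hpos] at hJ
  rw [div_lt_iff₀ hpos] at hJ'
  have hdist : 8 ^ J * δ x ≤ dist x (γ L) := by
    rw [hγ.target]
    linarith [hδ.le_add_dist x₀ x, dist_comm x x₀]
  have hκ : ENNReal.ofReal (1 / (24 * Λ)) ^ Module.finrank ℝ E ≠ 0 :=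
    pow_ne_zero _ (ENNReal.ofReal_pos.2 (by positivity)).ne'
  have hcount := ofReal_sub_qhLength_div_le (μ := μ) hδ hγ.toIsLipCurve hΛ
    (ENNReal.inv_mul_cancel hκ (by finiteness)).ge J L hγ.length_nonneg hdist
  refine (ENNReal.ofReal_le_ofReal (log_one_div_le_of_lt_pow_mul hβ (by linarith) hΛβ hpos hx₁
    hγ.qhLength_le (hpos.trans hx) hJ')).trans (ENNReal.ofReal_add_le.trans ?_)
  rw [ENNReal.ofReal_mul (by positivity)]
  gcongr
  exact hcount.trans (mul_le_mul_right (measure_mono Set.inter_subset_left) _)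

theorem exists_ofReal_log_le_approachRegion (hδ : IsBoundaryGauge G δ) {β C : ℝ} (hβ : 0 < β)
    (hC : 0 ≤ C) {x₀ : E} (hx₀ : x₀ ∈ G)
    (hG : ∀ x ∈ G, ∃ L γ, IsCuspCurve G δ β C γ L x x₀) :
    ∃ (A : ℝ≥0∞) (lam : ℝ), A ≠ ⊤ ∧ 1 ≤ lam ∧ ∀ x ∈ G, ENNReal.ofReal (Real.log (1 / δ x)) ≤
      A * (1 + qhVolume μ G δ (approachRegion δ lam x)) := by
  have : 0 < Real.log 8 := Real.log_pos (by norm_num)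
  obtain ⟨Λ, hΛ, hΛβ⟩ : ∃ Λ : ℝ, 1 ≤ Λ ∧ 2 * Real.log 8 / β ≤ Λ :=
    ⟨_, le_max_left _ _, le_max_right _ _⟩
  set κ := ENNReal.ofReal (1 / (24 * Λ)) ^ Module.finrank ℝ E
  have hκ : κ ≠ 0 := pow_ne_zero _ (ENNReal.ofReal_pos.2 (by positivity)).ne'
  set B := 2 * (Real.log 8 * (1 + C / Λ) - Real.log (δ x₀ / 2))
  refine ⟨ENNReal.ofReal (2 * Real.log 8) * κ⁻¹ + ENNReal.ofReal B, 16 * Λ,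
    by finiteness, by linarith, fun x hx => ?_⟩
  rcases le_or_gt (Real.log (1 / δ x)) 0 with hl | hl
  · rw [ENNReal.ofReal_of_nonpos hl]
    exact zero_le
  rcases le_or_gt (δ x₀ / 2) (δ x) with hnear | hfar
  · have hlB : Real.log (1 / δ x) ≤ B := by
      have := Real.log_le_log (half_pos (hδ.pos x₀ hx₀)) hnear
      have : 0 < Real.log 8 * (1 + C / Λ) := by positivity
      rw [one_div, Real.log_inv] at hl ⊢
      linarith
    calc ENNReal.ofReal (Real.log (1 / δ x)) ≤ ENNReal.ofReal B := by gcongr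
      _ ≤ _ := le_add_self.trans (le_mul_of_one_le_right' le_self_add)
  · obtain ⟨L, γ, hγ⟩ := hG x hx
    refine (ofReal_log_le_qhVolume_approachRegion (μ := μ) hδ hβ hγ hΛ hΛβ hfar hl.le).trans ?_
    rw [add_mul, ← mul_assoc]
    exact add_le_add (mul_le_mul_right le_add_self _) (le_mul_of_one_le_right' le_self_add)

end LogarithmicBound

section Jensen

variable {α : Type*} [MeasurableSpace α]

theorem lintegral_rpow_le_lintegral_rpow {P : Measure α} [IsProbabilityMeasure P] {f : α → ℝ≥0∞}
    (hf : AEMeasurable f P) {p : ℝ} (hp : 1 ≤ p) :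
    (∫⁻ x, f x ∂P) ^ p ≤ ∫⁻ x, f x ^ p ∂P := by
  have h := eLpNorm'_le_eLpNorm'_of_exponent_le one_pos hp P hf.aestronglyMeasurable
  simp only [eLpNorm', enorm_eq_self, ENNReal.rpow_one, div_one] at h
  rwa [one_div, ENNReal.le_rpow_inv_iff (by linarith)] at h

theorem enorm_sub_integral_rpow_le {P : Measure α} [IsProbabilityMeasure P] {u : α → ℝ}
    (hu : Integrable u P) (a : ℝ) {p : ℝ} (hp : 1 ≤ p) :
    ‖a - ∫ y, u y ∂P‖ₑ ^ p ≤ ∫⁻ y, ‖a - u y‖ₑ ^ p ∂P := by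
  have hint : Integrable (fun y => a - u y) P := (integrable_const a).sub hu
  calc ‖a - ∫ y, u y ∂P‖ₑ ^ p = ‖∫ y, (a - u y) ∂P‖ₑ ^ p := by
        rw [integral_sub (integrable_const a) hu, integral_const, probReal_univ, one_smul]
    _ ≤ (∫⁻ y, ‖a - u y‖ₑ ∂P) ^ p := by
        gcongr
        exact enorm_integral_le_lintegral_enorm _
    _ ≤ _ := lintegral_rpow_le_lintegral_rpow hint.aestronglyMeasurable.enorm hp

variable {ν : Measure α} {B B' : Set α} {u : α → ℝ}

theorem enorm_sub_setAverage_rpow_le (hB₀ : ν B ≠ 0) (hB : ν B ≠ ⊤) (hu : IntegrableOn u B ν)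
    (a : ℝ) {p : ℝ} (hp : 1 ≤ p) :
    ‖a - ⨍ y in B, u y ∂ν‖ₑ ^ p ≤ ⨍⁻ y in B, ‖a - u y‖ₑ ^ p ∂ν := by
  have : IsFiniteMeasure (ν.restrict B) := ⟨by simpa using hB.lt_top⟩
  have : NeZero (ν.restrict B) := ⟨by simpa using hB₀⟩
  exact enorm_sub_integral_rpow_le hu.to_average a hp

theorem enorm_setAverage_sub_setAverage_rpow_le (hB₀ : ν B ≠ 0) (hB : ν B ≠ ⊤) (hB₀' : ν B' ≠ 0)
    (hB' : ν B' ≠ ⊤) (hu : IntegrableOn u B ν) (hu' : IntegrableOn u B' ν) {p : ℝ} (hp : 1 ≤ p) :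
    ‖(⨍ x in B, u x ∂ν) - ⨍ y in B', u y ∂ν‖ₑ ^ p ≤
      ⨍⁻ x in B, ⨍⁻ y in B', ‖u x - u y‖ₑ ^ p ∂ν ∂ν := by
  rw [← edist_eq_enorm_sub, edist_comm, edist_eq_enorm_sub]
  refine (enorm_sub_setAverage_rpow_le hB₀ hB hu _ hp).trans (lintegral_mono fun x => ?_)
  rw [← edist_eq_enorm_sub, edist_comm, edist_eq_enorm_sub]
  exact enorm_sub_setAverage_rpow_le hB₀' hB' hu' _ hp

theorem setLIntegral_enorm_sub_setAverage_rpow_le (hB₀ : ν B ≠ 0) (hB : ν B ≠ ⊤)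
    (hu : IntegrableOn u B ν) (a : ℝ) {q : ℝ} (hq : 1 ≤ q) :
    ∫⁻ x in B, ‖u x - ⨍ y in B, u y ∂ν‖ₑ ^ q ∂ν ≤ 2 ^ q * ∫⁻ x in B, ‖u x - a‖ₑ ^ q ∂ν := by
  have hsplit : ∀ x, ‖u x - ⨍ y in B, u y ∂ν‖ₑ ^ q ≤
      2 ^ (q - 1) * (‖u x - a‖ₑ ^ q + ‖a - ⨍ y in B, u y ∂ν‖ₑ ^ q) := fun x => by
    rw [← sub_add_sub_cancel (u x) a]
    exact (ENNReal.rpow_le_rpow (enorm_add_le _ _) (by linarith)).trans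
      (ENNReal.rpow_add_le_mul_rpow_add_rpow _ _ hq)
  have hmean : ‖a - ⨍ y in B, u y ∂ν‖ₑ ^ q * ν B ≤ ∫⁻ x in B, ‖u x - a‖ₑ ^ q ∂ν := by
    calc ‖a - ⨍ y in B, u y ∂ν‖ₑ ^ q * ν B ≤ (⨍⁻ y in B, ‖a - u y‖ₑ ^ q ∂ν) * ν B := by
          gcongr
          exact enorm_sub_setAverage_rpow_le hB₀ hB hu a hq
      _ = ∫⁻ x in B, ‖u x - a‖ₑ ^ q ∂ν := by
          rw [mul_comm, measure_mul_setLAverage _ hB]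
          simp only [enorm_sub_rev]
  calc ∫⁻ x in B, ‖u x - ⨍ y in B, u y ∂ν‖ₑ ^ q ∂ν
      ≤ ∫⁻ x in B, 2 ^ (q - 1) * (‖u x - a‖ₑ ^ q + ‖a - ⨍ y in B, u y ∂ν‖ₑ ^ q) ∂ν :=
        lintegral_mono hsplit
    _ = 2 ^ (q - 1) * (∫⁻ x in B, ‖u x - a‖ₑ ^ q ∂ν + ‖a - ⨍ y in B, u y ∂ν‖ₑ ^ q * ν B) := by
        rw [lintegral_const_mul' _ _ (by finiteness), lintegral_add_right _ measurable_const,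
          setLIntegral_const]
    _ ≤ 2 ^ (q - 1) * (2 * ∫⁻ x in B, ‖u x - a‖ₑ ^ q ∂ν) := by
        rw [two_mul]
        gcongr
    _ = _ := by
        rw [← mul_assoc]
        congr 1
        simpa using (ENNReal.rpow_add (q - 1) 1 two_ne_zero ENNReal.ofNat_ne_top).symm

end Jensen

section SegmentGradient

variable {E : Type*} [NormedAddCommGroup E] [NormedSpace ℝ E]

/-- `g` controls the increments of `u` along segments in `G` in the way `g = ‖∇u‖ ^ p` does for a
differentiable `u`. -/
def IsSegmentGradient (p : ℝ) (G : Set E) (u : E → ℝ) (g : E → ℝ≥0∞) : Prop :=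
  ∀ x y, segment ℝ x y ⊆ G →
    ‖u x - u y‖ₑ ^ p ≤ ‖y - x‖ₑ ^ p * ∫⁻ t in Set.Icc (0 : ℝ) 1, g (x + t • (y - x))

variable [FiniteDimensional ℝ E] [MeasurableSpace E] [BorelSpace E] {μ : Measure E}
  [μ.IsAddHaarMeasure]

theorem lintegral_lintegral_Icc_comp_add_smul {f : E → E → ℝ≥0∞}
    (hf : Measurable (Function.uncurry f)) :
    ∫⁻ x, ∫⁻ w, ∫⁻ t in Set.Icc (0 : ℝ) 1, f (x + t • w) w ∂volume ∂μ ∂μ =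
      ∫⁻ z, ∫⁻ w, f z w ∂μ ∂μ := by
  have hcomp : Measurable fun q : (E × E) × ℝ => f (q.1.1 + q.2 • q.1.2) q.1.2 :=
    hf.comp (by fun_prop : Measurable fun q : (E × E) × ℝ => (q.1.1 + q.2 • q.1.2, q.1.2))
  rw [lintegral_lintegral_swap hcomp.lintegral_prod_right'.aemeasurable,
    lintegral_lintegral_swap hf.aemeasurable]
  refine lintegral_congr fun w => ?_
  rw [lintegral_lintegral_swap (f := fun x t => f (x + t • w) w)
    (hcomp.comp (by fun_prop : Measurable fun q : E × ℝ => ((q.1, w), q.2))).aemeasurable]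
  have htranslate : ∀ t : ℝ, ∫⁻ x, f (x + t • w) w ∂μ = ∫⁻ x, f x w ∂μ := fun t =>
    lintegral_add_right_eq_self (μ := μ) (fun x => f x w) (t • w)
  simp only [htranslate, lintegral_const, Measure.restrict_apply_univ, Real.volume_Icc, sub_zero,
    ENNReal.ofReal_one, mul_one]

variable {p : ℝ} {G : Set E} {δ : E → ℝ} {u : E → ℝ} {g : E → ℝ≥0∞}

namespace IsSegmentGradient

-- Substitute `z = x + t • w` for fixed `t` and `w = y - x`.
theorem lintegral_mul_enorm_sub_rpow_le (hu : IsSegmentGradient p G u g) (hg : Measurable g)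
    {a k : E → E → ℝ≥0∞} (hk : Measurable (Function.uncurry k))
    (hak : ∀ x y, a x y ≠ 0 → ∀ z ∈ segment ℝ x y, z ∈ G ∧ a x y ≤ k z (y - x)) :
    ∫⁻ x, ∫⁻ y, a x y * ‖u x - u y‖ₑ ^ p ∂μ ∂μ ≤
      ∫⁻ z, g z * ∫⁻ w, ‖w‖ₑ ^ p * k z w ∂μ ∂μ := by
  have hsegment : ∀ x w : E, ∀ t ∈ Set.Icc (0 : ℝ) 1, x + t • w ∈ segment ℝ x (x + w) := by
    intro x w t ht
    rw [segment_eq_image', add_sub_cancel_left]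
    exact ⟨t, ht, rfl⟩
  calc ∫⁻ x, ∫⁻ y, a x y * ‖u x - u y‖ₑ ^ p ∂μ ∂μ
      = ∫⁻ x, ∫⁻ w, a x (x + w) * ‖u x - u (x + w)‖ₑ ^ p ∂μ ∂μ := lintegral_congr fun x =>
        (lintegral_add_left_eq_self (fun y => a x y * ‖u x - u y‖ₑ ^ p) x).symm
    _ ≤ ∫⁻ x, ∫⁻ w, ∫⁻ t in Set.Icc (0 : ℝ) 1,
          g (x + t • w) * (‖w‖ₑ ^ p * k (x + t • w) w) ∂volume ∂μ ∂μ := by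
        gcongr with x w
        rcases eq_or_ne (a x (x + w)) 0 with ha | ha
        · simp only [ha, zero_mul, zero_le]
        have hinc := hu x (x + w) fun z hz => (hak x _ ha z hz).1
        rw [add_sub_cancel_left] at hinc
        calc a x (x + w) * ‖u x - u (x + w)‖ₑ ^ p
            ≤ a x (x + w) * (‖w‖ₑ ^ p * ∫⁻ t in Set.Icc (0 : ℝ) 1, g (x + t • w)) := by gcongr
          _ = ∫⁻ t in Set.Icc (0 : ℝ) 1, a x (x + w) * ‖w‖ₑ ^ p * g (x + t • w) := by
              rw [← mul_assoc, lintegral_const_mul _ (by fun_prop)]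
          _ ≤ _ := setLIntegral_mono' measurableSet_Icc fun t ht => by
              have := (hak x _ ha _ (hsegment x w t ht)).2
              rw [add_sub_cancel_left] at this
              rw [mul_comm (a x (x + w)), mul_comm]
              gcongr
    _ = ∫⁻ z, ∫⁻ w, g z * (‖w‖ₑ ^ p * k z w) ∂μ ∂μ :=
        lintegral_lintegral_Icc_comp_add_smul (f := fun z w => g z * (‖w‖ₑ ^ p * k z w))
          (by fun_prop)
    _ = _ := lintegral_congr fun z => lintegral_const_mul _ (by fun_prop)

theorem setLIntegral_mul_setLIntegral_enorm_sub_rpow_le (hu : IsSegmentGradient p G u g)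
    (hg : Measurable g) (hp : 0 ≤ p) {S : Set E} (hS : MeasurableSet S) {T : E → Set E}
    (hT : ∀ x, MeasurableSet (T x)) {c κ : E → ℝ≥0∞} {ρ : E → ℝ} (hκ : Measurable κ)
    (hρ : Measurable ρ) (h : ∀ x ∈ S, ∀ y ∈ T x, ∀ z ∈ segment ℝ x y,
      z ∈ G ∧ dist x y < ρ z ∧ c x ≤ κ z) :
    ∫⁻ x in S, c x * ∫⁻ y in T x, ‖u x - u y‖ₑ ^ p ∂μ ∂μ ≤
      ∫⁻ z, ENNReal.ofReal (ρ z) ^ p * μ (Metric.ball 0 (ρ z)) * κ z * g z ∂μ := by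
  classical
  let a : E → E → ℝ≥0∞ := fun x y => if x ∈ S ∧ y ∈ T x then c x else 0
  let k : E → E → ℝ≥0∞ := fun z w => if ‖w‖ < ρ z then κ z else 0
  have hk : Measurable (Function.uncurry k) :=
    (hκ.comp measurable_fst).ite (measurableSet_lt (by fun_prop) (by fun_prop)) measurable_const
  calc ∫⁻ x in S, c x * ∫⁻ y in T x, ‖u x - u y‖ₑ ^ p ∂μ ∂μ
      ≤ ∫⁻ x, ∫⁻ y, a x y * ‖u x - u y‖ₑ ^ p ∂μ ∂μ := by
        rw [← lintegral_indicator hS]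
        refine lintegral_mono fun x => ?_
        by_cases hx : x ∈ S
        · rw [Set.indicator_of_mem hx, ← lintegral_indicator (hT x)]
          refine (lintegral_const_mul_le _ _).trans_eq (lintegral_congr fun y => ?_)
          by_cases hy : y ∈ T x <;> simp [a, hx, hy]
        · simp [hx]
    _ ≤ ∫⁻ z, g z * ∫⁻ w, ‖w‖ₑ ^ p * k z w ∂μ ∂μ := by
        refine hu.lintegral_mul_enorm_sub_rpow_le hg hk fun x y hxy z hz => ?_
        obtain ⟨hx, hy, -⟩ : x ∈ S ∧ y ∈ T x ∧ c x ≠ 0 := by simpa [a] using hxy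
        obtain ⟨hzG, hdist, hcκ⟩ := h x hx y hy z hz
        rw [dist_comm, dist_eq_norm] at hdist
        simpa [a, k, hx, hy, hzG, hdist] using hcκ
    _ ≤ _ := by
        refine lintegral_mono fun z => ?_
        rw [mul_comm _ (g z)]
        gcongr
        calc ∫⁻ w, ‖w‖ₑ ^ p * k z w ∂μ
            ≤ ∫⁻ w, (Metric.ball 0 (ρ z)).indicator
                (fun _ => ENNReal.ofReal (ρ z) ^ p * κ z) w ∂μ := by
              refine lintegral_mono fun w => ?_
              by_cases hw : ‖w‖ < ρ z
              · rw [Set.indicator_of_mem (mem_ball_zero_iff.2 hw), ← ofReal_norm]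
                simp only [k, hw, if_true]
                gcongr
              · simp [k, hw]
          _ = _ := by
              rw [lintegral_indicator_const measurableSet_ball, mul_right_comm]

theorem lintegral_ball_enorm_sub_rpow_le (hu : IsSegmentGradient p G u g) (hg : Measurable g)
    (hp : 0 ≤ p) {z : E} {r : ℝ} (hG : Metric.ball z r ⊆ G) :
    ∫⁻ x in Metric.ball z r, ∫⁻ y in Metric.ball z r, ‖u x - u y‖ₑ ^ p ∂μ ∂μ ≤
      ENNReal.ofReal (2 * r) ^ p * μ (Metric.ball 0 (2 * r)) * ∫⁻ y in Metric.ball z r, g y ∂μ := by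
  have h := hu.setLIntegral_mul_setLIntegral_enorm_sub_rpow_le (μ := μ) hg hp (c := 1)
    (κ := (Metric.ball z r).indicator 1) (ρ := fun _ => 2 * r) measurableSet_ball
    (fun _ => measurableSet_ball) (measurable_one.indicator measurableSet_ball) measurable_const
    fun x hx y hy w hw => by
      have hwB := (convex_ball z r).segment_subset hx hy hw
      refine ⟨hG hwB, ?_, by simp [hwB]⟩
      rw [two_mul]
      exact (dist_triangle_right x y z).trans_lt (add_lt_add hx hy)
  simp only [Pi.one_apply, one_mul, mul_assoc] at h
  refine h.trans_eq ?_
  simp only [← mul_assoc]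
  rw [← lintegral_indicator measurableSet_ball, ← lintegral_const_mul _
    (hg.indicator measurableSet_ball)]
  refine lintegral_congr fun w => ?_
  by_cases hw : w ∈ Metric.ball z r <;> simp [hw]

end IsSegmentGradient

/-- The mean over the Whitney ball at `x` of the `p`-th power of `|u x - u|`. -/
noncomputable def whitneyOscillation (μ : Measure E) (δ : E → ℝ) (p : ℝ) (u : E → ℝ) (x : E) :
    ℝ≥0∞ :=
  ⨍⁻ y in Metric.ball x (δ x / 4), ‖u x - u y‖ₑ ^ p ∂μ

theorem IsSegmentGradient.lintegral_whitneyOscillation_le (hu : IsSegmentGradient p G u g)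
    (hg : Measurable g) (hp : 0 ≤ p) (hδ : IsBoundaryGauge G δ) {D : ℝ} (hD : ∀ x ∈ G, δ x ≤ D) :
    ∫⁻ x in G, whitneyOscillation μ δ p u x ∂μ ≤
      ENNReal.ofReal D ^ p * ENNReal.ofReal (5 / 2) ^ Module.finrank ℝ E * ∫⁻ y in G, g y ∂μ := by
  have hGm := hδ.isOpen.measurableSet
  have hδc := hδ.continuous.measurable
  let κ : E → ℝ≥0∞ := G.indicator fun z => (μ (Metric.ball z (δ z / 5)))⁻¹
  have hκ : Measurable κ :=
    (measurable_measure_ball (by fun_prop : Measurable fun z => δ z / 5)).inv.indicator hGm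
  have hWhitney : ∀ x ∈ G, ∀ y ∈ Metric.ball x (δ x / 4), ∀ z ∈ segment ℝ x y,
      z ∈ G ∧ dist x y < δ z / 2 ∧ (μ (Metric.ball x (δ x / 4)))⁻¹ ≤ κ z := by
    intro x hx y hy z hz
    rw [Metric.mem_ball, dist_comm] at hy
    have hzx : dist z x ≤ dist x y := segment_subset_closedBall_left x y hz
    have hδx := hδ.pos x hx
    have hxz := hδ.le_add_dist x z
    have hzx' := hδ.le_add_dist z x
    rw [dist_comm] at hxz
    have hzG : z ∈ G := hδ.ball_subset x hx (by rw [Metric.mem_ball]; linarith)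
    refine ⟨hzG, by linarith, ?_⟩
    rw [show κ z = _ from Set.indicator_of_mem hzG _, ENNReal.inv_le_inv,
      Measure.addHaar_ball_center μ x, Measure.addHaar_ball_center μ z]
    exact measure_mono (Metric.ball_subset_ball (by linarith))
  simp only [whitneyOscillation, setLAverage_eq, ENNReal.div_eq_inv_mul]
  refine (hu.setLIntegral_mul_setLIntegral_enorm_sub_rpow_le hg hp hGm
    (fun _ => measurableSet_ball) hκ (hδc.div_const 2) hWhitney).trans ?_
  rw [← lintegral_indicator hGm, ← lintegral_const_mul _ (hg.indicator hGm)]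
  refine lintegral_mono fun z => ?_
  by_cases hz : z ∈ G
  · have hδz := hδ.pos z hz
    have hμ := Metric.measure_ball_pos μ z (show 0 < δ z / 5 by positivity)
    simp only [κ, Set.indicator_of_mem hz]
    rw [show δ z / 2 = 5 / 2 * (δ z / 5) by ring, addHaar_ball_mul_eq 0 z (by norm_num),
      ← mul_assoc, ENNReal.mul_inv_cancel_right hμ.ne' measure_ball_lt_top.ne]
    gcongr
    linarith [hD z hz]
  · simp [κ, hz]

end SegmentGradient

section WhitneyAverage

variable {E : Type*} [NormedAddCommGroup E] [NormedSpace ℝ E] [FiniteDimensional ℝ E]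
  [MeasurableSpace E] {μ : Measure E} [μ.IsAddHaarMeasure]
  {p : ℝ} {G : Set E} {δ : E → ℝ} {u : E → ℝ} {g : E → ℝ≥0∞}

/-- The mean of `u` over the Whitney ball at `x`. -/
noncomputable def whitneyAverage (μ : Measure E) (δ : E → ℝ) (u : E → ℝ) (x : E) : ℝ :=
  ⨍ y in Metric.ball x (δ x / 4), u y ∂μ

theorem enorm_sub_whitneyAverage_rpow_le {x : E} (hx : 0 < δ x)
    (hu : IntegrableOn u (Metric.ball x (δ x / 4)) μ) (hp : 1 ≤ p) :
    ‖u x - whitneyAverage μ δ u x‖ₑ ^ p ≤ whitneyOscillation μ δ p u x :=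
  enorm_sub_setAverage_rpow_le (Metric.measure_ball_pos μ x (by positivity)).ne'
    measure_ball_lt_top.ne hu _ hp

variable [BorelSpace E]

theorem inv_addHaar_ball_mul_le (x y : E) {r s k : ℝ} (hr : 0 < r) (hk : 0 < k)
    (hs : s ≤ k * r) :
    (μ (Metric.ball x r))⁻¹ * μ (Metric.ball y s) ≤ ENNReal.ofReal k ^ Module.finrank ℝ E := by
  calc (μ (Metric.ball x r))⁻¹ * μ (Metric.ball y s)
      ≤ (μ (Metric.ball x r))⁻¹ * μ (Metric.ball y (k * r)) := by gcongr
    _ = ENNReal.ofReal k ^ Module.finrank ℝ E := by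
        rw [addHaar_ball_mul_eq y x hk, mul_left_comm, ENNReal.inv_mul_cancel
          (Metric.measure_ball_pos μ x hr).ne' measure_ball_lt_top.ne, mul_one]

theorem IsSegmentGradient.enorm_whitneyAverage_sub_rpow_le (hu : IsSegmentGradient p G u g)
    (hg : Measurable g) (hp : 1 ≤ p) (hui : IntegrableOn u G μ) (hδ : IsBoundaryGauge G δ)
    {z z' : E} (hz : z ∈ G) (hzz' : dist z z' ≤ δ z / 8) :
    ‖whitneyAverage μ δ u z - whitneyAverage μ δ u z'‖ₑ ^ p ≤
      ENNReal.ofReal 10 ^ Module.finrank ℝ E * ENNReal.ofReal (δ z) ^ p *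
        ⨍⁻ y in Metric.ball z (δ z / 2), g y ∂μ := by
  have hδz := hδ.pos z hz
  have hδz' : 7 / 8 * δ z ≤ δ z' := by linarith [hδ.le_add_dist z z']
  have hδz'' : δ z' ≤ 9 / 8 * δ z := by linarith [hδ.le_add_dist z' z, dist_comm z z']
  set B := Metric.ball z (δ z / 4)
  set B' := Metric.ball z' (δ z' / 4)
  set U := Metric.ball z (δ z / 2)
  have hBU : B ⊆ U := Metric.ball_subset_ball (by linarith)
  have hB'U : B' ⊆ U := Metric.ball_subset_ball' (by rw [dist_comm]; linarith)
  have hUG : U ⊆ G := (Metric.ball_subset_ball (by linarith)).trans (hδ.ball_subset z hz)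
  have hB₀ : μ B ≠ 0 := (Metric.measure_ball_pos μ z (by positivity)).ne'
  have hB'₀ : μ B' ≠ 0 := (Metric.measure_ball_pos μ z' (by linarith)).ne'
  have : μ U ≠ 0 := (Metric.measure_ball_pos μ z (by positivity)).ne'
  calc ‖whitneyAverage μ δ u z - whitneyAverage μ δ u z'‖ₑ ^ p
      ≤ ⨍⁻ x in B, ⨍⁻ y in B', ‖u x - u y‖ₑ ^ p ∂μ ∂μ :=
        enorm_setAverage_sub_setAverage_rpow_le hB₀ measure_ball_lt_top.ne hB'₀
          measure_ball_lt_top.ne (hui.mono_set (hBU.trans hUG)) (hui.mono_set (hB'U.trans hUG)) hp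
    _ = (μ B)⁻¹ * ((μ B')⁻¹ * ∫⁻ x in B, ∫⁻ y in B', ‖u x - u y‖ₑ ^ p ∂μ ∂μ) := by
        simp only [setLAverage_eq, ENNReal.div_eq_inv_mul]
        rw [lintegral_const_mul' _ _ (ENNReal.inv_ne_top.2 hB'₀)]
    _ ≤ (μ B)⁻¹ * ((μ B')⁻¹ * ∫⁻ x in U, ∫⁻ y in U, ‖u x - u y‖ₑ ^ p ∂μ ∂μ) := by
        gcongr
    _ ≤ (μ B)⁻¹ * ((μ B')⁻¹ * (ENNReal.ofReal (2 * (δ z / 2)) ^ p *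
          μ (Metric.ball 0 (2 * (δ z / 2))) * ∫⁻ y in U, g y ∂μ)) := by
        gcongr
        exact hu.lintegral_ball_enorm_sub_rpow_le hg (by linarith) hUG
    _ = (μ B')⁻¹ * μ (Metric.ball 0 (δ z)) * ((μ B)⁻¹ * μ U) * ENNReal.ofReal (δ z) ^ p *
          ⨍⁻ y in U, g y ∂μ := by
        rw [← measure_mul_setLAverage _ measure_ball_lt_top.ne, mul_div_cancel₀ _ two_ne_zero]
        ring
    _ ≤ ENNReal.ofReal 5 ^ Module.finrank ℝ E * ENNReal.ofReal 2 ^ Module.finrank ℝ E *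
          ENNReal.ofReal (δ z) ^ p * ⨍⁻ y in U, g y ∂μ := by
        gcongr
        · exact inv_addHaar_ball_mul_le _ _ (by linarith) (by norm_num) (by linarith)
        · exact inv_addHaar_ball_mul_le _ _ (by linarith) (by norm_num) (by linarith)
    _ = _ := by
        rw [← mul_pow, ← ENNReal.ofReal_mul (by norm_num)]
        norm_num

end WhitneyAverage

section PowerEstimates

variable {a b β C D : ℝ}

theorem rpow_le_two_mul_rpow (ha : 0 ≤ a) (hb : 0 ≤ b) (hab : a ≤ 2 * b) (hβ₀ : 0 ≤ β)
    (hβ : β ≤ 1) : a ^ β ≤ 2 * b ^ β := by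
  calc a ^ β ≤ (2 * b) ^ β := by gcongr
    _ = 2 ^ β * b ^ β := Real.mul_rpow zero_le_two hb
    _ ≤ 2 * b ^ β := by
        gcongr
        exact (Real.rpow_le_rpow_of_exponent_le one_le_two hβ).trans_eq (Real.rpow_one 2)

theorem ofReal_rpow_mul_ofReal_mul_rpow_pow_le (ha : 0 < a) (haD : a ≤ D) (hC : 0 ≤ C) {p : ℝ}
    {n : ℕ} (hp : 0 ≤ p + (β - 1) * n) :
    ENNReal.ofReal a ^ p * ENNReal.ofReal (C * a ^ (β - 1)) ^ n ≤
      ENNReal.ofReal (C ^ n * D ^ (p + (β - 1) * n)) := by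
  rw [ENNReal.ofReal_rpow_of_pos ha, ← ENNReal.ofReal_pow (by positivity),
    ← ENNReal.ofReal_mul (by positivity)]
  refine ENNReal.ofReal_le_ofReal ?_
  calc a ^ p * (C * a ^ (β - 1)) ^ n = C ^ n * a ^ (p + (β - 1) * n) := by
        rw [Real.rpow_add ha, Real.rpow_mul_natCast ha.le, mul_pow, mul_left_comm]
    _ ≤ C ^ n * D ^ (p + (β - 1) * n) := by gcongr

theorem dist_lt_two_mul_add_rpow_mul_rpow {X : Type*} [PseudoMetricSpace X] {x y z : X}
    (hβ₀ : 0 ≤ β) (hβ : β ≤ 1) (hC : 0 ≤ C) (ha : 0 < a) (haD : a ≤ D) (hb : 0 ≤ b)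
    (hab : a ≤ 2 * b) (hxz : dist x z ≤ C * a ^ β) (hyz : dist y z < a) :
    dist x y < 2 * (C + D ^ (1 - β)) * b ^ β := by
  have haβ : a ≤ D ^ (1 - β) * a ^ β := by
    calc a = a ^ (1 - β) * a ^ β := by rw [← Real.rpow_add ha, sub_add_cancel, Real.rpow_one]
      _ ≤ D ^ (1 - β) * a ^ β := by
          have := sub_nonneg.2 hβ
          gcongr
  have hD : 0 ≤ D := ha.le.trans haD
  calc dist x y ≤ dist x z + dist y z := dist_triangle_right x y z
    _ < (C + D ^ (1 - β)) * a ^ β := by linarith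
    _ ≤ (C + D ^ (1 - β)) * (2 * b ^ β) := by
        gcongr
        exact rpow_le_two_mul_rpow ha.le hb hab hβ₀ hβ
    _ = _ := by ring

end PowerEstimates

section CuspPotential

variable {E : Type*} [NormedAddCommGroup E] [NormedSpace ℝ E] [FiniteDimensional ℝ E]
  [MeasurableSpace E] [BorelSpace E] {μ : Measure E} [μ.IsAddHaarMeasure]
  {G : Set E} {δ : E → ℝ} {β C : ℝ} {g : E → ℝ≥0∞}

/-- The potential obtained by spreading the mass `g y` of each `y ∈ G` uniformly over the ball
`ball y (C * δ y ^ β)`, up to a factor comparable to `C ^ n`. A curve with the bound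
`IsCuspCurve.le_rpow` that starts at `x` only meets points whose ball contains `x`. -/
noncomputable def cuspPotential (μ : Measure E) (G : Set E) (δ : E → ℝ) (β C : ℝ) (g : E → ℝ≥0∞)
    (x : E) : ℝ≥0∞ :=
  ∫⁻ y in {y | y ∈ G ∧ dist x y < C * δ y ^ β}, (μ (Metric.ball y (δ y ^ β)))⁻¹ * g y ∂μ

theorem measurableSet_cuspRegion (hG : MeasurableSet G) (hδ : Measurable δ) :
    MeasurableSet {p : E × E | p.2 ∈ G ∧ dist p.1 p.2 < C * δ p.2 ^ β} :=
  (measurable_snd hG).inter (measurableSet_lt (f := fun p : E × E => dist p.1 p.2)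
    (g := fun p => C * δ p.2 ^ β) (by fun_prop) (by fun_prop))

theorem measurable_inv_measure_ball_rpow_mul (hδ : Measurable δ) (hg : Measurable g) :
    Measurable fun y => (μ (Metric.ball y (δ y ^ β)))⁻¹ * g y :=
  (measurable_measure_ball (by fun_prop : Measurable fun y => δ y ^ β)).inv.mul hg

theorem measurable_cuspPotential (hG : MeasurableSet G) (hδ : Measurable δ) (hg : Measurable g) :
    Measurable (cuspPotential μ G δ β C g) :=
  measurable_setLIntegral_prodMk_left (measurableSet_cuspRegion hG hδ)
    ((measurable_inv_measure_ball_rpow_mul hδ hg).comp measurable_snd)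

theorem lintegral_cuspPotential_le (hG : MeasurableSet G) (hδ : Measurable δ)
    (hpos : ∀ y ∈ G, 0 < δ y) (hC : 0 < C) (hg : Measurable g) :
    ∫⁻ x, cuspPotential μ G δ β C g x ∂μ ≤
      ENNReal.ofReal C ^ Module.finrank ℝ E * ∫⁻ y in G, g y ∂μ := by
  calc ∫⁻ x, cuspPotential μ G δ β C g x ∂μ
      = ∫⁻ y, ∫⁻ _ in {x | y ∈ G ∧ dist x y < C * δ y ^ β},
          (μ (Metric.ball y (δ y ^ β)))⁻¹ * g y ∂μ ∂μ :=
        setLIntegral_setLIntegral_swap (measurableSet_cuspRegion hG hδ)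
          ((measurable_inv_measure_ball_rpow_mul hδ hg).comp measurable_snd)
    _ ≤ ∫⁻ y in G, ENNReal.ofReal C ^ Module.finrank ℝ E * g y ∂μ := by
        rw [← lintegral_indicator hG]
        refine lintegral_mono fun y => ?_
        by_cases hy : y ∈ G
        · rw [setLIntegral_const, Set.indicator_of_mem hy, mul_right_comm]
          gcongr
          simp only [hy, true_and]
          exact inv_addHaar_ball_mul_le y y (Real.rpow_pos_of_pos (hpos y hy) β) hC le_rfl
        · simp [hy]
    _ = _ := lintegral_const_mul _ hg

theorem inv_addHaar_ball_half_le (hβ₀ : 0 ≤ β) (hβ : β ≤ 1) (y z : E) {a b : ℝ} (ha : 0 < a)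
    (hb : 0 < b) (hba : b ≤ 2 * a) :
    (μ (Metric.ball z (a / 2)))⁻¹ ≤ ENNReal.ofReal (4 * a ^ (β - 1)) ^ Module.finrank ℝ E *
      (μ (Metric.ball y (b ^ β)))⁻¹ := by
  have hball := Metric.measure_ball_pos μ y (Real.rpow_pos_of_pos hb β)
  rw [← div_eq_mul_inv, ENNReal.le_div_iff_mul_le (Or.inl hball.ne')
    (Or.inl measure_ball_lt_top.ne)]
  refine inv_addHaar_ball_mul_le z y (by positivity) (by positivity) ?_
  refine (rpow_le_two_mul_rpow hb.le ha.le hba hβ₀ hβ).trans_eq ?_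
  rw [Real.rpow_sub_one ha.ne']
  field_simp
  norm_num

theorem ofReal_rpow_mul_setLAverage_le_cuspPotential (hδ : IsBoundaryGauge G δ) (hβ₀ : 0 ≤ β)
    (hβ : β ≤ 1) (hC : 0 ≤ C) {p D : ℝ} (hp : 0 ≤ p + (β - 1) * Module.finrank ℝ E) {x z : E}
    (hz : z ∈ G) (hD : δ z ≤ D) (hxz : dist x z ≤ C * δ z ^ β) :
    ENNReal.ofReal (δ z) ^ p * ⨍⁻ y in Metric.ball z (δ z / 2), g y ∂μ ≤
      ENNReal.ofReal (4 ^ Module.finrank ℝ E * D ^ (p + (β - 1) * Module.finrank ℝ E)) *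
        cuspPotential μ G δ β (2 * (C + D ^ (1 - β))) g x := by
  set n := Module.finrank ℝ E
  set U := Metric.ball z (δ z / 2)
  have hδz := hδ.pos z hz
  have hU : ∀ y ∈ U, y ∈ G ∧ 0 < δ y ∧ δ y ≤ 2 * δ z ∧ δ z ≤ 2 * δ y := by
    intro y hy
    rw [Metric.mem_ball] at hy
    have hyG := hδ.ball_subset z hz (Metric.mem_ball.2 (by linarith))
    exact ⟨hyG, hδ.pos y hyG, by linarith [hδ.le_add_dist y z],
      by linarith [hδ.le_add_dist z y, dist_comm y z]⟩
  calc ENNReal.ofReal (δ z) ^ p * ⨍⁻ y in U, g y ∂μ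
      ≤ ∫⁻ y in U, ENNReal.ofReal (δ z) ^ p * ((μ U)⁻¹ * g y) ∂μ := by
        rw [setLAverage_eq, ENNReal.div_eq_inv_mul]
        refine le_trans ?_ (lintegral_const_mul_le _ _)
        gcongr
        exact lintegral_const_mul_le _ _
    _ ≤ ∫⁻ y in U, ENNReal.ofReal (4 ^ n * D ^ (p + (β - 1) * n)) *
          ((μ (Metric.ball y (δ y ^ β)))⁻¹ * g y) ∂μ := by
        refine setLIntegral_mono' measurableSet_ball fun y hy => ?_
        obtain ⟨-, hδy, hyz, -⟩ := hU y hy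
        rw [← mul_assoc, ← mul_assoc]
        gcongr ?_ * _
        refine (mul_le_mul_right (inv_addHaar_ball_half_le hβ₀ hβ y z hδz hδy hyz) _).trans ?_
        rw [← mul_assoc]
        gcongr
        exact ofReal_rpow_mul_ofReal_mul_rpow_pow_le hδz hD zero_le_four hp
    _ ≤ _ := by
        rw [lintegral_const_mul' _ _ ENNReal.ofReal_ne_top]
        gcongr
        refine lintegral_mono_set fun y hy => ?_
        obtain ⟨hyG, hδy, -, hzy⟩ := hU y hy
        exact ⟨hyG, dist_lt_two_mul_add_rpow_mul_rpow hβ₀ hβ hC hδz hD hδy.le hzy hxz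
          (hy.out.trans (half_lt_self hδz))⟩

end CuspPotential

section Chaining

variable {X Y : Type*} [PseudoMetricSpace X] [PseudoMetricSpace Y] {G : Set X} {δ : X → ℝ}
  {β C L : ℝ} {γ : ℝ → X} {x x₀ : X}

theorem IsLipCurve.sub_le_mul_of_qhLength_le (hγ : IsLipCurve G γ L x x₀)
    (hδ : IsBoundaryGauge G δ) {s t k : ℝ} (hst : s ≤ t) (hk : -1 < k)
    (h : qhLength δ γ s t ≤ Real.log (1 + k)) : t - s ≤ k * δ (γ s) := by
  have hpos := hδ.pos _ (hγ.mem s)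
  have := sub_nonneg.2 hst
  have hratio := (Real.log_le_log_iff (by positivity) (by linarith)).1
    ((hγ.log_le_qhLength hδ hst).trans h)
  rw [div_le_iff₀ hpos] at hratio
  linarith

theorem IsCuspCurve.qhLength_le_mul_one_add_max (hγ : IsCuspCurve G δ β C γ L x x₀) (hβ : 0 < β)
    (hC : 0 ≤ C) : qhLength δ γ 0 L ≤ (1 / β + C) * (1 + max (Real.log (1 / δ x)) 0) := by
  have : 0 < 1 / β := by positivity
  calc qhLength δ γ 0 L ≤ 1 / β * Real.log (1 / δ x) + C := hγ.qhLength_le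
    _ ≤ 1 / β * (1 + max (Real.log (1 / δ x)) 0) + C * (1 + max (Real.log (1 / δ x)) 0) := by
        gcongr
        · exact (le_max_left _ _).trans (le_add_of_nonneg_left zero_le_one)
        · exact le_mul_of_one_le_right hC (le_add_of_nonneg_right (le_max_right _ _))
    _ = _ := (add_mul _ _ _).symm

-- The curve splits into about `qhLength δ γ 0 L / log (9 / 8)` pieces of quasihyperbolic length at
-- most `log (9 / 8)`, and each piece leaves the Whitney ball of its starting point only slightly.
theorem IsCuspCurve.edist_le (hγ : IsCuspCurve G δ β C γ L x x₀) (hδ : IsBoundaryGauge G δ)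
    (hβ : 0 < β) (hC : 0 ≤ C) {f : X → Y} {K : ℝ≥0∞} (hf : ∀ z ∈ G, dist x z ≤ C * δ z ^ β →
      ∀ z', dist z z' ≤ δ z / 8 → edist (f z) (f z') ≤ K) :
    edist (f x) (f x₀) ≤ ENNReal.ofReal ((1 / β + C) / Real.log (1 + 1 / 8) + 2) *
      (1 + ENNReal.ofReal (Real.log (1 / δ x))) * K := by
  set c := Real.log (1 + 1 / 8)
  have hc : 0 < c := Real.log_pos (by norm_num)
  have hstep : ∀ s ∈ Set.Icc 0 L, ∀ t ∈ Set.Icc 0 L, s ≤ t →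
      qhLength δ γ s t ≤ c → edist (f (γ s)) (f (γ t)) ≤ K := by
    intro s hs t _ hst hshort
    refine hf _ (hγ.mem s) ?_ _ ((dist_le_sub_of_lipschitzWith_one hγ.lipschitzWith hst).trans ?_)
    · rw [← hγ.source]
      linarith [dist_le_sub_of_lipschitzWith_one hγ.lipschitzWith hs.1, hγ.le_rpow s hs]
    · linarith [hγ.sub_le_mul_of_qhLength_le hδ hst (by norm_num) hshort]
  set m := ⌈qhLength δ γ 0 L / c⌉₊
  have hm : qhLength δ γ 0 L ≤ (m + 1) * c := by
    rw [← div_le_iff₀ hc]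
    linarith [Nat.le_ceil (qhLength δ γ 0 L / c)]
  have hm' : (m + 1 : ℝ) ≤ ((1 / β + C) / c + 2) * (1 + max (Real.log (1 / δ x)) 0) := by
    have hceil := Nat.ceil_lt_add_one
      (div_nonneg (hγ.qhLength_nonneg hδ hγ.length_nonneg) hc.le)
    have hqh := div_le_div_of_nonneg_right (hγ.qhLength_le_mul_one_add_max hβ hC) hc.le
    rw [mul_div_right_comm] at hqh
    linarith [le_max_right (Real.log (1 / δ x)) 0]
  have hchain := edist_le_of_forall_integral_le (hγ.continuous_one_div hδ) (f := fun s => f (γ s))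
    hc.le hstep m L ⟨hγ.length_nonneg, le_rfl⟩ hm
  rw [hγ.source, hγ.target] at hchain
  refine hchain.trans ?_
  gcongr
  calc (m + 1 : ℝ≥0∞) = ENNReal.ofReal (m + 1) := by norm_cast
    _ ≤ ENNReal.ofReal (((1 / β + C) / c + 2) * (1 + max (Real.log (1 / δ x)) 0)) := by gcongr
    _ = _ := by
        rw [ENNReal.ofReal_mul (by positivity), ENNReal.ofReal_add zero_le_one (by positivity),
          ENNReal.ofReal_one, ENNReal.ofReal_max, ENNReal.ofReal_zero, max_zero]

end Chaining

section Holder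

theorem lintegral_mul_rpow_one_div_rpow_le {α : Type*} [MeasurableSpace α] {ν : Measure α}
    {f h : α → ℝ≥0∞} {p q : ℝ} (hf : AEMeasurable f ν) (hh : AEMeasurable h ν) (hq : 0 < q)
    (hqp : q < p) :
    ∫⁻ x, (f x * h x ^ (1 / p)) ^ q ∂ν ≤
      (∫⁻ x, f x ^ (q * p / (p - q)) ∂ν) ^ ((p - q) / p) * (∫⁻ x, h x ∂ν) ^ (q / p) := by
  have hp : 0 < p := hq.trans hqp
  have hpq : 0 < p - q := sub_pos.2 hqp
  have hconj : (p / (p - q)).HolderConjugate (p / q) := by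
    rw [Real.holderConjugate_iff]
    refine ⟨(one_lt_div hpq).2 (by linarith), ?_⟩
    field_simp
    ring
  have hHolder := ENNReal.lintegral_mul_le_Lp_mul_Lq ν hconj (hf.pow_const q)
    (hh.pow_const (q / p))
  simp only [Pi.mul_apply, ← ENNReal.rpow_mul, one_div_div, mul_div_assoc'] at hHolder
  rw [show q / p * p / q = 1 by field_simp] at hHolder
  simpa only [ENNReal.mul_rpow_of_nonneg _ _ hq.le, ← ENNReal.rpow_mul, ENNReal.rpow_one,
    one_div_mul_eq_div] using hHolder

end Holder

section WeakToStrong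

variable {E : Type*} [NormedAddCommGroup E] [NormedSpace ℝ E] [FiniteDimensional ℝ E]
  [MeasurableSpace E] [BorelSpace E] {μ : Measure E} [μ.IsAddHaarMeasure]
  {p q β C D : ℝ} {G : Set E} {δ : E → ℝ} {u : E → ℝ} {g : E → ℝ≥0∞} {x₀ : E}

theorem exists_edist_le_mul_one_add_qhVolume {Y : Type*} [PseudoMetricSpace Y]
    (hδ : IsBoundaryGauge G δ) (hβ : 0 < β) (hC : 0 ≤ C) (hx₀ : x₀ ∈ G)
    (hG : ∀ x ∈ G, ∃ L γ, IsCuspCurve G δ β C γ L x x₀) :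
    ∃ (A : ℝ≥0∞) (lam : ℝ), A ≠ ⊤ ∧ 1 ≤ lam ∧ ∀ x ∈ G, ∀ (f : E → Y) (K : ℝ≥0∞),
      (∀ z ∈ G, dist x z ≤ C * δ z ^ β → ∀ z', dist z z' ≤ δ z / 8 → edist (f z) (f z') ≤ K) →
      edist (f x) (f x₀) ≤ A * (1 + qhVolume μ G δ (approachRegion δ lam x)) * K := by
  obtain ⟨A, lam, hA, hlam, hlog⟩ :=
    exists_ofReal_log_le_approachRegion (μ := μ) hδ hβ hC hx₀ hG
  set N := ENNReal.ofReal ((1 / β + C) / Real.log (1 + 1 / 8) + 2)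
  refine ⟨N * (1 + A), lam, by finiteness, hlam, fun x hx f K hf => ?_⟩
  obtain ⟨L, γ, hγ⟩ := hG x hx
  set V := qhVolume μ G δ (approachRegion δ lam x)
  refine (hγ.edist_le hδ hβ hC hf).trans ?_
  rw [mul_assoc N (1 + A)]
  gcongr
  calc 1 + ENNReal.ofReal (Real.log (1 / δ x)) ≤ (1 + V) + A * (1 + V) :=
        add_le_add le_self_add (hlog x hx)
    _ = (1 + A) * (1 + V) := by ring

theorem IsSegmentGradient.edist_whitneyAverage_le (hu : IsSegmentGradient p G u g)
    (hg : Measurable g) (hp : 1 ≤ p) (hui : IntegrableOn u G μ) (hδ : IsBoundaryGauge G δ)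
    (hβ₀ : 0 ≤ β) (hβ : β ≤ 1) (hC : 0 ≤ C) (hpβ : 0 ≤ p + (β - 1) * Module.finrank ℝ E)
    {x z z' : E} (hz : z ∈ G) (hD : δ z ≤ D) (hxz : dist x z ≤ C * δ z ^ β)
    (hzz' : dist z z' ≤ δ z / 8) :
    edist (whitneyAverage μ δ u z) (whitneyAverage μ δ u z') ≤
      (ENNReal.ofReal 10 ^ Module.finrank ℝ E *
        ENNReal.ofReal (4 ^ Module.finrank ℝ E * D ^ (p + (β - 1) * Module.finrank ℝ E)) *
          cuspPotential μ G δ β (2 * (C + D ^ (1 - β))) g x) ^ (1 / p) := by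
  rw [edist_eq_enorm_sub, one_div, ENNReal.le_rpow_inv_iff (zero_lt_one.trans_le hp)]
  refine (hu.enorm_whitneyAverage_sub_rpow_le (μ := μ) hg hp hui hδ hz hzz').trans ?_
  rw [mul_assoc, mul_assoc]
  exact mul_le_mul_right (ofReal_rpow_mul_setLAverage_le_cuspPotential hδ hβ₀ hβ hC hpβ hz hD hxz) _

theorem measurable_whitneyOscillation (hδ : Measurable δ) (hu : Measurable u) :
    Measurable (whitneyOscillation μ δ p u) := by
  unfold whitneyOscillation
  simp only [setLAverage_eq]
  refine Measurable.div ?_ (measurable_measure_ball (hδ.div_const 4))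
  exact measurable_setLIntegral_prodMk_left (S := {z : E × E | dist z.2 z.1 < δ z.1 / 4})
    (measurableSet_lt (by fun_prop) (by fun_prop)) (by fun_prop)

/-- The density whose integral controls the Poincaré inequality: the Whitney oscillation of `u`
plus `K` times the cusp potential of `g`. -/
noncomputable def poincareDensity (μ : Measure E) (G : Set E) (δ : E → ℝ) (β C p : ℝ) (K : ℝ≥0∞)
    (u : E → ℝ) (g : E → ℝ≥0∞) (x : E) : ℝ≥0∞ :=
  whitneyOscillation μ δ p u x + K * cuspPotential μ G δ β C g x

theorem exists_enorm_sub_whitneyAverage_le (hδ : IsBoundaryGauge G δ) (hD : ∀ x ∈ G, δ x ≤ D)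
    (hβ₀ : 0 < β) (hβ : β ≤ 1) (hC : 0 ≤ C) (hx₀ : x₀ ∈ G)
    (hG : ∀ x ∈ G, ∃ L γ, IsCuspCurve G δ β C γ L x x₀) (hp : 1 ≤ p)
    (hpβ : 0 ≤ p + (β - 1) * Module.finrank ℝ E) :
    ∃ (A K : ℝ≥0∞) (lam : ℝ), A ≠ ⊤ ∧ K ≠ ⊤ ∧ 1 ≤ lam ∧ ∀ (u : E → ℝ) (g : E → ℝ≥0∞),
      Measurable g → IntegrableOn u G μ → IsSegmentGradient p G u g → ∀ x ∈ G,
        ‖u x - whitneyAverage μ δ u x₀‖ₑ ≤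
          A * (1 + qhVolume μ G δ (approachRegion δ lam x)) *
            poincareDensity μ G δ β (2 * (C + D ^ (1 - β))) p K u g x ^ (1 / p) := by
  obtain ⟨A, lam, hA, hlam, hchain⟩ :=
    exists_edist_le_mul_one_add_qhVolume (Y := ℝ) (μ := μ) hδ hβ₀ hC hx₀ hG
  let K := ENNReal.ofReal 10 ^ Module.finrank ℝ E *
    ENNReal.ofReal (4 ^ Module.finrank ℝ E * D ^ (p + (β - 1) * Module.finrank ℝ E))
  refine ⟨1 + A, K, lam, by finiteness, by finiteness, hlam, fun u g hg hui hu x hx => ?_⟩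
  set V := qhVolume μ G δ (approachRegion δ lam x)
  set Φ := poincareDensity μ G δ β (2 * (C + D ^ (1 - β))) p K u g x
  have hδx := hδ.pos x hx
  have hlocal : ‖u x - whitneyAverage μ δ u x‖ₑ ≤ Φ ^ (1 / p) := by
    have hball : Metric.ball x (δ x / 4) ⊆ G :=
      (Metric.ball_subset_ball (by linarith)).trans (hδ.ball_subset x hx)
    rw [one_div, ENNReal.le_rpow_inv_iff (by linarith)]
    exact (enorm_sub_whitneyAverage_rpow_le hδx (hui.mono_set hball) hp).trans le_self_add
  have hglobal : edist (whitneyAverage μ δ u x) (whitneyAverage μ δ u x₀) ≤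
      A * (1 + V) * Φ ^ (1 / p) :=
    hchain x hx _ _ fun z hz hxz z' hzz' =>
      (hu.edist_whitneyAverage_le hg hp hui hδ hβ₀.le hβ hC hpβ hz (hD z hz) hxz hzz').trans <| by
        gcongr
        exact le_add_self
  calc ‖u x - whitneyAverage μ δ u x₀‖ₑ
      ≤ ‖u x - whitneyAverage μ δ u x‖ₑ +
          edist (whitneyAverage μ δ u x) (whitneyAverage μ δ u x₀) := by
        rw [← edist_eq_enorm_sub, ← edist_eq_enorm_sub]
        exact edist_triangle _ _ _
    _ ≤ 1 * (1 + V) * Φ ^ (1 / p) + A * (1 + V) * Φ ^ (1 / p) := by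
        gcongr
        rw [one_mul]
        exact hlocal.trans (le_mul_of_one_le_left' le_self_add)
    _ = (1 + A) * (1 + V) * Φ ^ (1 / p) := by ring

theorem IsSegmentGradient.lintegral_poincareDensity_le (hu : IsSegmentGradient p G u g)
    (hg : Measurable g) (hp : 0 ≤ p) (hδ : IsBoundaryGauge G δ) (hD : ∀ x ∈ G, δ x ≤ D)
    (hC : 0 < C) (K : ℝ≥0∞) :
    ∫⁻ x in G, poincareDensity μ G δ β C p K u g x ∂μ ≤
      (ENNReal.ofReal D ^ p * ENNReal.ofReal (5 / 2) ^ Module.finrank ℝ E +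
        K * ENNReal.ofReal C ^ Module.finrank ℝ E) * ∫⁻ y in G, g y ∂μ := by
  have hGm := hδ.isOpen.measurableSet
  have hδm := hδ.continuous.measurable
  have hcusp := measurable_cuspPotential (μ := μ) (β := β) (C := C) hGm hδm hg
  calc ∫⁻ x in G, poincareDensity μ G δ β C p K u g x ∂μ
      = ∫⁻ x in G, whitneyOscillation μ δ p u x ∂μ +
          K * ∫⁻ x in G, cuspPotential μ G δ β C g x ∂μ := by
        simp only [poincareDensity]
        rw [lintegral_add_right _ (hcusp.const_mul K), lintegral_const_mul _ hcusp]
    _ ≤ _ := by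
        rw [add_mul, mul_assoc K]
        gcongr
        · exact hu.lintegral_whitneyOscillation_le hg hp hδ hD
        · exact (setLIntegral_le_lintegral _ _).trans
            (lintegral_cuspPotential_le hGm hδm hδ.pos hC hg)

theorem exists_lintegral_enorm_sub_whitneyAverage_rpow_le (hδ : IsBoundaryGauge G δ)
    (hGb : Bornology.IsBounded G) (hβ₀ : 0 < β) (hβ : β ≤ 1) (hC : 0 < C) (hx₀ : x₀ ∈ G)
    (hG : ∀ x ∈ G, ∃ L γ, IsCuspCurve G δ β C γ L x x₀) (hp : 1 ≤ p)
    (hpβ : 0 ≤ p + (β - 1) * Module.finrank ℝ E) (hq : 0 < q) (hqp : q < p) :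
    ∃ K ≠ ⊤, ∀ (u : E → ℝ) (g : E → ℝ≥0∞), Measurable u → Measurable g → IntegrableOn u G μ →
      IsSegmentGradient p G u g → ∫⁻ x in G, ‖u x - whitneyAverage μ δ u x₀‖ₑ ^ q ∂μ ≤
        K * (∫⁻ y in G, g y ∂μ) ^ (q / p) := by
  obtain ⟨D, hD⟩ : ∃ D, ∀ x ∈ G, δ x ≤ D := by
    simpa [bddAbove_def] using (hδ.lipschitzWith.isBounded_image hGb).bddAbove
  have hD₀ : 0 < D := (hδ.pos x₀ hx₀).trans_le (hD x₀ hx₀)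
  obtain ⟨A, K, lam, hA, hK, hlam, hpointwise⟩ :=
    exists_enorm_sub_whitneyAverage_le (μ := μ) hδ hD hβ₀ hβ hC.le hx₀ hG hp hpβ
  have : 0 < p - q := sub_pos.2 hqp
  set V : E → ℝ≥0∞ := fun x => A * (1 + qhVolume μ G δ (approachRegion δ lam x))
  set M := ENNReal.ofReal D ^ p * ENNReal.ofReal (5 / 2) ^ Module.finrank ℝ E +
    K * ENNReal.ofReal (2 * (C + D ^ (1 - β))) ^ Module.finrank ℝ E
  have hVm : Measurable V := ((measurable_measure_prodMk_left
    (measurableSet_prod_approachRegion hδ.continuous.measurable lam)).const_add 1).const_mul A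
  have hV : ∫⁻ x in G, V x ^ (q * p / (p - q)) ∂μ ≠ ⊤ := by
    have hr : 0 ≤ q * p / (p - q) := by positivity
    simp only [V, ENNReal.mul_rpow_of_nonneg _ _ hr]
    rw [lintegral_const_mul' _ _ (by finiteness)]
    exact ENNReal.mul_ne_top (by finiteness)
      (lintegral_one_add_approachRegion_rpow_ne_top hδ hGb hlam _)
  refine ⟨(∫⁻ x in G, V x ^ (q * p / (p - q)) ∂μ) ^ ((p - q) / p) * M ^ (q / p), ?_,
    fun u g hum hg hui hu => ?_⟩
  · have hM : M ≠ ⊤ := by finiteness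
    exact ENNReal.mul_ne_top (ENNReal.rpow_ne_top_of_nonneg (by positivity) hV)
      (ENNReal.rpow_ne_top_of_nonneg (by positivity) hM)
  have hdensity : Measurable (poincareDensity μ G δ β (2 * (C + D ^ (1 - β))) p K u g) :=
    (measurable_whitneyOscillation hδ.continuous.measurable hum).add
      ((measurable_cuspPotential hδ.isOpen.measurableSet hδ.continuous.measurable hg).const_mul K)
  calc ∫⁻ x in G, ‖u x - whitneyAverage μ δ u x₀‖ₑ ^ q ∂μ
      ≤ ∫⁻ x in G, (V x * poincareDensity μ G δ β (2 * (C + D ^ (1 - β))) p K u g x ^ (1 / p)) ^ q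
          ∂μ := setLIntegral_mono' hδ.isOpen.measurableSet fun x hx => by
        gcongr
        exact hpointwise u g hg hui hu x hx
    _ ≤ (∫⁻ x in G, V x ^ (q * p / (p - q)) ∂μ) ^ ((p - q) / p) *
          (M * ∫⁻ y in G, g y ∂μ) ^ (q / p) := by
        refine (lintegral_mul_rpow_one_div_rpow_le hVm.aemeasurable hdensity.aemeasurable hq
          hqp).trans ?_
        gcongr
        exact hu.lintegral_poincareDensity_le hg (by linarith) hδ hD (by positivity) K
    _ = _ := by
        rw [ENNReal.mul_rpow_of_nonneg _ _ (by positivity), mul_assoc]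

end WeakToStrong

section Differentiable

variable {E : Type*} [NormedAddCommGroup E] [NormedSpace ℝ E] {p : ℝ} {G : Set E} {u : E → ℝ}

theorem IsSegmentGradient.indicator {g : E → ℝ≥0∞} (hu : IsSegmentGradient p G u g) :
    IsSegmentGradient p G (G.indicator u) g := by
  intro x y hxy
  rw [Set.indicator_of_mem (hxy (left_mem_segment ℝ x y)),
    Set.indicator_of_mem (hxy (right_mem_segment ℝ x y))]
  exact hu x y hxy

variable [MeasurableSpace E] [BorelSpace E]

theorem enorm_sub_le_lintegral_enorm_fderiv (hG : IsOpen G) (hu : DifferentiableOn ℝ u G) {x y : E}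
    (hxy : segment ℝ x y ⊆ G) :
    ‖u x - u y‖ₑ ≤ ‖y - x‖ₑ * ∫⁻ t in Set.Icc (0 : ℝ) 1, ‖fderiv ℝ u (x + t • (y - x))‖ₑ := by
  set w := y - x
  set J := ∫⁻ t in Set.Icc (0 : ℝ) 1, ‖fderiv ℝ u (x + t • w)‖ₑ
  have hγ : Measurable fun t : ℝ => x + t • w := by fun_prop
  have hJ : ∫⁻ t in Set.Icc (0 : ℝ) 1, ‖fderiv ℝ u (x + t • w) w‖ₑ ≤ ‖w‖ₑ * J := by
    have hm : Measurable fun t : ℝ => ‖fderiv ℝ u (x + t • w)‖ₑ :=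
      ((measurable_fderiv ℝ u).comp hγ).enorm
    rw [← lintegral_const_mul _ hm]
    gcongr with t
    rw [mul_comm]
    exact ContinuousLinearMap.le_opENorm _ _
  rcases eq_or_ne w 0 with hw | hw
  · simp [sub_eq_zero.1 hw]
  rcases eq_or_ne J ⊤ with hJ_top | hJ_top
  · rw [hJ_top, ENNReal.mul_top (enorm_ne_zero.2 hw)]
    exact le_top
  have hint : IntegrableOn (fun t : ℝ => fderiv ℝ u (x + t • w) w) (Set.Icc 0 1) volume :=
    ⟨((measurable_fderiv_apply_const ℝ u w).comp hγ).aestronglyMeasurable,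
      hJ.trans_lt (ENNReal.mul_lt_top enorm_lt_top hJ_top.lt_top)⟩
  have hderiv : ∀ t ∈ Set.uIcc (0 : ℝ) 1,
      HasDerivAt (fun t : ℝ => u (x + t • w)) (fderiv ℝ u (x + t • w) w) t := by
    intro t ht
    rw [Set.uIcc_of_le zero_le_one] at ht
    have hmem : x + t • w ∈ G := hxy (by rw [segment_eq_image']; exact ⟨t, ht, rfl⟩)
    have hline : HasDerivAt (fun t : ℝ => x + t • w) w t := by
      simpa using ((hasDerivAt_id t).smul_const w).const_add x
    exact (hu.differentiableAt (hG.mem_nhds hmem)).hasFDerivAt.comp_hasDerivAt t hline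
  have hFTC := intervalIntegral.integral_eq_sub_of_hasDerivAt hderiv
    ((intervalIntegrable_iff_integrableOn_Icc_of_le zero_le_one).2 hint)
  rw [intervalIntegral.integral_of_le zero_le_one, ← integral_Icc_eq_integral_Ioc, one_smul,
    zero_smul, add_zero, add_sub_cancel] at hFTC
  rw [enorm_sub_rev, ← hFTC]
  exact (enorm_integral_le_lintegral_enorm _).trans hJ

theorem isSegmentGradient_enorm_fderiv_rpow (hG : IsOpen G) (hu : DifferentiableOn ℝ u G)
    (hp : 1 ≤ p) : IsSegmentGradient p G u fun z => ‖fderiv ℝ u z‖ₑ ^ p := by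
  intro x y hxy
  have : IsProbabilityMeasure (volume.restrict (Set.Icc (0 : ℝ) 1)) := ⟨by simp⟩
  have hm : Measurable fun t : ℝ => ‖fderiv ℝ u (x + t • (y - x))‖ₑ :=
    ((measurable_fderiv ℝ u).comp (by fun_prop)).enorm
  calc ‖u x - u y‖ₑ ^ p
      ≤ (‖y - x‖ₑ * ∫⁻ t in Set.Icc (0 : ℝ) 1, ‖fderiv ℝ u (x + t • (y - x))‖ₑ) ^ p := by
        gcongr
        exact enorm_sub_le_lintegral_enorm_fderiv hG hu hxy
    _ ≤ _ := by
        rw [ENNReal.mul_rpow_of_nonneg _ _ (by linarith)]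
        gcongr
        exact lintegral_rpow_le_lintegral_rpow hm.aemeasurable hp

end Differentiable

section Poincare

theorem exists_lintegral_enorm_sub_setAverage_rpow_le {E : Type*} [NormedAddCommGroup E]
    [NormedSpace ℝ E] [FiniteDimensional ℝ E] [MeasurableSpace E] [BorelSpace E] {μ : Measure E}
    [μ.IsAddHaarMeasure] {p q β C : ℝ} {G : Set E} {δ : E → ℝ} {x₀ : E}
    (hδ : IsBoundaryGauge G δ) (hGb : Bornology.IsBounded G) (hβ₀ : 0 < β) (hβ : β ≤ 1)
    (hC : 0 < C) (hx₀ : x₀ ∈ G) (hG : ∀ x ∈ G, ∃ L γ, IsCuspCurve G δ β C γ L x x₀)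
    (hpβ : 0 ≤ p + (β - 1) * Module.finrank ℝ E) (hq : 1 ≤ q) (hqp : q < p) :
    ∃ K ≠ ⊤, ∀ u : E → ℝ, DifferentiableOn ℝ u G → IntegrableOn u G μ →
      ∫⁻ x in G, ‖u x - ⨍ y in G, u y ∂μ‖ₑ ^ q ∂μ ≤
        K * (∫⁻ x in G, ‖fderiv ℝ u x‖ₑ ^ p ∂μ) ^ (q / p) := by
  classical
  have hGo := hδ.isOpen
  have hGm := hGo.measurableSet
  obtain ⟨K, hK, hweak⟩ := exists_lintegral_enorm_sub_whitneyAverage_rpow_le (μ := μ) hδ hGb hβ₀ hβ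
    hC hx₀ hG (hq.trans hqp.le) hpβ (zero_lt_one.trans_le hq) hqp
  refine ⟨2 ^ q * K, ENNReal.mul_ne_top (by finiteness) hK, fun u hu hui => ?_⟩
  have hmeas : Measurable (G.indicator u) := by
    rw [← Set.piecewise_eq_indicator]
    exact hu.continuousOn.measurable_piecewise continuousOn_const hGm
  have hint : IntegrableOn (G.indicator u) G μ :=
    hui.congr_fun (fun x hx => (Set.indicator_of_mem hx u).symm) hGm
  have hsegment := isSegmentGradient_enorm_fderiv_rpow hGo hu (hq.trans hqp.le)
  calc ∫⁻ x in G, ‖u x - ⨍ y in G, u y ∂μ‖ₑ ^ q ∂μ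
      ≤ 2 ^ q * ∫⁻ x in G, ‖u x - whitneyAverage μ δ (G.indicator u) x₀‖ₑ ^ q ∂μ :=
        setLIntegral_enorm_sub_setAverage_rpow_le (hGo.measure_pos μ ⟨x₀, hx₀⟩).ne'
          hGb.measure_lt_top.ne hui _ hq
    _ = 2 ^ q * ∫⁻ x in G, ‖G.indicator u x - whitneyAverage μ δ (G.indicator u) x₀‖ₑ ^ q ∂μ := by
        congr 1
        exact setLIntegral_congr_fun hGm fun x hx => by simp only [Set.indicator_of_mem hx]
    _ ≤ 2 ^ q * (K * (∫⁻ x in G, ‖fderiv ℝ u x‖ₑ ^ p ∂μ) ^ (q / p)) := by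
        gcongr
        exact hweak _ _ hmeas ((measurable_fderiv ℝ u).enorm.pow_const p) hint hsegment.indicator
    _ = _ := (mul_assoc _ _ _).symm

theorem integral_norm_rpow_eq_toReal_lintegral {α F : Type*} [MeasurableSpace α]
    [NormedAddCommGroup F] {ν : Measure α} {f : α → F} {p : ℝ} (hp : 0 ≤ p)
    (hf : AEStronglyMeasurable (fun x => ‖f x‖ ^ p) ν) :
    ∫ x, ‖f x‖ ^ p ∂ν = (∫⁻ x, ‖f x‖ₑ ^ p ∂ν).toReal := by
  rw [integral_eq_lintegral_of_nonneg_ae (ae_of_all _ fun x => by positivity) hf]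
  simp only [← ENNReal.ofReal_rpow_of_nonneg (norm_nonneg _) hp, ofReal_norm]

theorem supportsPoincare_of_lintegral_le {n : ℕ} {G : Set (EuclideanSpace ℝ (Fin n))} {q p : ℝ}
    (hG : IsOpen G) (hq : 0 < q) (hp : 0 < p) {K : ℝ≥0∞} (hK : K ≠ ⊤)
    (h : ∀ u : EuclideanSpace ℝ (Fin n) → ℝ, DifferentiableOn ℝ u G → IntegrableOn u G →
      ∫⁻ x in G, ‖u x - ⨍ y in G, u y‖ₑ ^ q ≤ K * (∫⁻ x in G, ‖fderiv ℝ u x‖ₑ ^ p) ^ (q / p)) :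
    SupportsPoincare G q p := by
  have hGm := hG.measurableSet
  refine ⟨(K ^ (1 / q)).toReal, fun u hu hui hgrad => ?_⟩
  set J := ∫⁻ x in G, ‖fderiv ℝ u x‖ₑ ^ p
  have hmean : (∫ y in G, u y) / (volume G).toReal = ⨍ y in G, u y := by
    rw [setAverage_eq, smul_eq_mul, div_eq_inv_mul, measureReal_def]
  have hJ : ∫⁻ x in G, ‖fderivWithin ℝ u G x‖ₑ ^ p = J :=
    setLIntegral_congr_fun hGm fun x hx => by simp only [fderivWithin_of_isOpen hG hx]
  have hJ_top : J ≠ ⊤ := by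
    have hfin := hgrad.hasFiniteIntegral.ne
    simp only [Real.enorm_rpow_of_nonneg (norm_nonneg _) hp.le, enorm_norm, hJ] at hfin
    exact hfin
  have hosc : AEStronglyMeasurable (fun x => ‖u x - ⨍ y in G, u y‖ ^ q) (volume.restrict G) :=
    ((hui.aestronglyMeasurable.sub aestronglyMeasurable_const).norm.aemeasurable.pow_const
      q).aestronglyMeasurable
  simp only [hmean, ← Real.norm_eq_abs]
  rw [integral_norm_rpow_eq_toReal_lintegral hq.le hosc,
    integral_norm_rpow_eq_toReal_lintegral hp.le hgrad.aestronglyMeasurable, hJ,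
    ENNReal.toReal_rpow, ENNReal.toReal_rpow, ← ENNReal.toReal_mul]
  refine ENNReal.toReal_mono (by finiteness) ?_
  calc (∫⁻ x in G, ‖u x - ⨍ y in G, u y‖ₑ ^ q) ^ (1 / q) ≤ (K * J ^ (q / p)) ^ (1 / q) := by
        gcongr
        exact h u hu hui
    _ = K ^ (1 / q) * J ^ (1 / p) := by
        rw [ENNReal.mul_rpow_of_nonneg _ _ (by positivity), ← ENNReal.rpow_mul]
        congr 2
        field_simp

end Poincare

theorem stmt_19_general {n : ℕ} (hn : n ≠ 0) {G : Set (EuclideanSpace ℝ (Fin n))} (hGo : IsOpen G)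
    (hGc : IsConnected G) (hGb : Bornology.IsBounded G) {β p q : ℝ} (hβ₀ : 0 < β)
    (hpβ : 1 - p / n ≤ β) (hβ : β ≤ 1) (hqhbc : QHBC G β) (hq : 1 ≤ q) (hqp : q < p) :
    SupportsPoincare G q p := by
  obtain ⟨x₀, hx₀, c, hc⟩ := hqhbc
  have : NeZero n := ⟨hn⟩
  have hδ := isBoundaryGauge_infDist_frontier hGo hGb
  obtain ⟨C, hC, hcusp⟩ := exists_isCuspCurve hδ
    (fun x hx => exists_isLipCurve hGo hGc.isPreconnected hx hx₀) hx₀ hβ₀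
    fun x hx => qhDist_eq_gaugeDist G x x₀ ▸ hc x hx
  have hfinrank : 0 ≤ p + (β - 1) * Module.finrank ℝ (EuclideanSpace ℝ (Fin n)) := by
    have hn₀ : (0 : ℝ) < n := by positivity
    rw [sub_le_comm, le_div_iff₀ hn₀] at hpβ
    rw [finrank_euclideanSpace_fin]
    linarith
  obtain ⟨K, hK, hpoincare⟩ := exists_lintegral_enorm_sub_setAverage_rpow_le (μ := volume) hδ hGb
    hβ₀ hβ hC hx₀ hcusp hfinrank hq hqp
  exact supportsPoincare_of_lintegral_le hGo (by linarith) (by linarith) hK hpoincare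

/-- Let `G ⊂ ℝⁿ` be a bounded domain satisfying a `β`-quasihyperbolic
boundary condition with `1 - 2/n ≤ β ≤ 1` and let `1 ≤ q < 2`. If the Neumann problem
for `L_A` on `G` is `q`-solvable precisely when `G` supports a `(q,2)`-Poincaré
inequality, then the Neumann problem on `G` is `q`-solvable. -/
theorem stmt_19 (n : ℕ) (hn : 2 ≤ n) (G : Set (EuclideanSpace ℝ (Fin n)))
    (hGo : IsOpen G) (hGc : IsConnected G) (hGb : Bornology.IsBounded G)
    (β : ℝ) (hβ0 : 0 < β) (hβ1 : 1 - 2 / (n:ℝ) ≤ β) (hβ2 : β ≤ 1)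
    (hqhbc : QHBC G β)
    (q : ℝ) (hq : 1 ≤ q) (hq2 : q < 2)
    (NeumannSolvable : Prop)
    (hchar : NeumannSolvable ↔ SupportsPoincare G q 2) :
    NeumannSolvable := by
  exact hchar.2 (stmt_19_general (by lia) hGo hGc hGb hβ0 hβ1 hβ2 hqhbc hq hq2)
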